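/- arXiv:1903.10399 — 2 statements merged into one kernel-verified Lean document; each statement's English description precedes it below -/
import Mathlib

section
/- (Accuracy of the approximate meta-gradient.) Under bounded inputs and Lipschitz loss, for every probability measure μ on Z with ‖x‖ ≤ R μ-almost surely, every h ∈ ℝ^d and λ > 0, the discrepancy Δ_{Z_n}(h) = ∇L_{Z_n}(h) − ∇̂L_{Z_n}(h) = −λ( w_h(Z_n) − w^{(n+1)}_h(Z_n) ) between the exact meta-gradient (defined via the biased ERM w_h(Z_n)) and its approximation (defined via the last iterate w^{(n+1)} of Algorithm 1) satisfies E_{Z_n∼μ^n} ‖Δ_{Z_n}(h)‖² ≤ 4 R² L² (log n + 1)/n. -/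
open MeasureTheory Real
open scoped InnerProductSpace

noncomputable section

abbrev Vec (d : ℕ) := EuclideanSpace ℝ (Fin d)
abbrev Pt (d : ℕ) := Vec d × ℝ

/-- Empirical risk of `w` on the dataset `S`. -/
def empRisk {d n : ℕ} (ℓ : ℝ → ℝ → ℝ) (S : Fin n → Pt d) (w : Vec d) : ℝ :=
  (n : ℝ)⁻¹ * ∑ k, ℓ (⟪(S k).1, w⟫_ℝ) ((S k).2)

/-- Biased regularized empirical risk. -/
def regRisk {d n : ℕ} (ℓ : ℝ → ℝ → ℝ) (lam : ℝ) (S : Fin n → Pt d)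
    (h w : Vec d) : ℝ :=
  empRisk ℓ S w + lam / 2 * ‖w - h‖ ^ 2

/-- True risk of `w` under the task distribution `μ`. -/
def trueRisk {d : ℕ} (ℓ : ℝ → ℝ → ℝ) (μ : Measure (Pt d)) (w : Vec d) : ℝ :=
  ∫ z, ℓ (⟪z.1, w⟫_ℝ) (z.2) ∂μ

/-- `u` is a subgradient of `f : ℝ → ℝ` at `a`. -/
def IsSubgradAt (f : ℝ → ℝ) (u a : ℝ) : Prop :=
  ∀ b, f a + u * (b - a) ≤ f b

section AveragedPaths

variable {E ι : Type*} [NormedAddCommGroup E]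

/-- Partial sums of `g` centred at `c`. -/
def centredSum (c : E) (g : ℕ → E) (k : ℕ) : E := ∑ i ∈ Finset.range k, (g i - c)

theorem centredSum_zero (c : E) (g : ℕ → E) : centredSum c g 0 = 0 := by simp [centredSum]

theorem centredSum_succ (c : E) (g : ℕ → E) (k : ℕ) :
    centredSum c g (k + 1) = centredSum c g k + (g k - c) :=
  Finset.sum_range_succ _ _

theorem sq_norm_sub_le_four {B : ℝ} {x y : E} (hx : ‖x‖ ≤ B) (hy : ‖y‖ ≤ B) :
    ‖x - y‖ ^ 2 ≤ 4 * B ^ 2 := by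
  have h1 : ‖x - y‖ ≤ 2 * B := (norm_sub_le x y).trans (by linarith)
  nlinarith [norm_nonneg (x - y)]

variable [InnerProductSpace ℝ E]

/-- A family of set-valued operators on `E`, each monotone decreasing with values in the ball of
radius `B`. -/
structure AntitoneFamily (T : ι → E → E → Prop) (B : ℝ) : Prop where
  inner_nonpos : ∀ i v v' g g', T i v g → T i v' g' → ⟪g - g', v - v'⟫_ℝ ≤ 0
  norm_le : ∀ i v g, T i v g → ‖g‖ ≤ B

/-- `g` visits the operators in the order `s`, evaluating each one at the average of the values
collected so far. -/
def IsAveragedPath (T : ι → E → E → Prop) (n : ℕ) (s : ℕ → ι) (g : ℕ → E) : Prop :=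
  ∀ k < n, T (s k) ((k : ℝ)⁻¹ • ∑ i ∈ Finset.range k, g i) (g k)

theorem centredSum_eq_sub (c : E) (g : ℕ → E) (k : ℕ) :
    centredSum c g k = ∑ i ∈ Finset.range k, g i - (k : ℝ) • c := by
  simp [centredSum, Finset.sum_sub_distrib, Nat.cast_smul_eq_nsmul]

theorem centredSum_eq_smul (c : E) (g : ℕ → E) (k : ℕ) :
    centredSum c g k = (k : ℝ) • ((k : ℝ)⁻¹ • ∑ i ∈ Finset.range k, g i - c) := by
  rcases Nat.eq_zero_or_pos k with rfl | hk
  · simp [centredSum]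
  · have : (k : ℝ) ≠ 0 := by positivity
    rw [centredSum_eq_sub, smul_sub, smul_inv_smul₀ this]

/-- The centred second moment is at most the second moment, up to the squared error of the mean. -/
theorem sum_sq_sub_le {B : ℝ} (c : E) (g : ℕ → E) (k : ℕ) (hg : ∀ i < k, ‖g i‖ ≤ B) :
    ∑ i ∈ Finset.range k, ‖g i - c‖ ^ 2 ≤ k * B ^ 2 + ‖centredSum c g k‖ ^ 2 / k := by
  rcases Nat.eq_zero_or_pos k with rfl | hk
  · simp
  have hk0 : (0 : ℝ) < k := by exact_mod_cast hk
  set G := ∑ i ∈ Finset.range k, g i with hG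
  have h1 : ∑ i ∈ Finset.range k, ‖g i - c‖ ^ 2
      = ∑ i ∈ Finset.range k, ‖g i‖ ^ 2 - 2 * ⟪G, c⟫_ℝ + k * ‖c‖ ^ 2 := by
    simp only [norm_sub_sq_real, Finset.sum_add_distrib, Finset.sum_sub_distrib, hG, sum_inner,
      Finset.mul_sum, Finset.sum_const, Finset.card_range, nsmul_eq_mul]
  have h2 : ∑ i ∈ Finset.range k, ‖g i‖ ^ 2 ≤ k * B ^ 2 := by
    calc _ ≤ ∑ i ∈ Finset.range k, B ^ 2 :=
          Finset.sum_le_sum fun i hi =>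
            pow_le_pow_left₀ (norm_nonneg _) (hg i (Finset.mem_range.1 hi)) 2
      _ = _ := by simp
  have h3 : ‖centredSum c g k‖ ^ 2 = ‖G‖ ^ 2 - 2 * k * ⟪G, c⟫_ℝ + k ^ 2 * ‖c‖ ^ 2 := by
    rw [centredSum_eq_sub, norm_sub_sq_real, inner_smul_right, norm_smul, mul_pow]
    simp only [Real.norm_natCast]
    ring
  have h4 : ‖centredSum c g k‖ ^ 2 / k = ‖G‖ ^ 2 / k - 2 * ⟪G, c⟫_ℝ + k * ‖c‖ ^ 2 := by
    rw [h3]; field_simp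
  have h5 : 0 ≤ ‖G‖ ^ 2 / k := by positivity
  rw [h1, h4]; linarith

namespace AntitoneFamily

variable {T : ι → E → E → Prop} {B : ℝ} {n : ℕ} {s : ℕ → ι} {g g' : ℕ → E} {c : E} {gs : ι → E}

theorem inner_centredSum_nonpos (hT : AntitoneFamily T B) (hg : IsAveragedPath T n s g)
    (hgs : ∀ i, T i c (gs i)) {k : ℕ} (hk : k < n) :
    ⟪centredSum c g k, g k - gs (s k)⟫_ℝ ≤ 0 := by
  rw [centredSum_eq_smul, inner_smul_left, real_inner_comm]
  exact mul_nonpos_of_nonneg_of_nonpos (by simp)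
    (hT.inner_nonpos _ _ _ _ _ (hg k hk) (hgs (s k)))

theorem sq_centredSum_succ_le (hT : AntitoneFamily T B) (hg : IsAveragedPath T n s g)
    (hgs : ∀ i, T i c (gs i)) {k : ℕ} (hk : k < n) :
    ‖centredSum c g (k + 1)‖ ^ 2 ≤ ‖centredSum c g k‖ ^ 2
      + 2 * ⟪centredSum c g k, gs (s k) - c⟫_ℝ + ‖g k - c‖ ^ 2 := by
  rw [centredSum_succ, norm_add_sq_real]
  have h1 := hT.inner_centredSum_nonpos hg hgs hk
  have h2 : g k - c = (g k - gs (s k)) + (gs (s k) - c) := by abel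
  have h3 : ⟪centredSum c g k, g k - c⟫_ℝ = ⟪centredSum c g k, g k - gs (s k)⟫_ℝ
      + ⟪centredSum c g k, gs (s k) - c⟫_ℝ := by rw [← inner_add_right, ← h2]
  linarith

/-- Energy bound after summation by parts, valid for every averaged path. -/
theorem sq_centredSum_sub_le (hT : AntitoneFamily T B) (hg : IsAveragedPath T n s g)
    (hgs : ∀ i, T i c (gs i)) {k : ℕ} (hk : k ≤ n) :
    ‖centredSum c g k‖ ^ 2 - 2 * ⟪centredSum c g k, centredSum c (gs ∘ s) k⟫_ℝ
      ≤ ∑ i ∈ Finset.range k,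
        (‖g i - c‖ ^ 2 - 2 * ⟪g i - c, centredSum c (gs ∘ s) (i + 1)⟫_ℝ) := by
  induction k with
  | zero => simp [centredSum_zero]
  | succ k ih =>
    have h1 := hT.sq_centredSum_succ_le hg hgs (k := k) (by omega)
    have h2 := ih (by omega)
    rw [Finset.sum_range_succ]
    have h3 : ⟪centredSum c g (k + 1), centredSum c (gs ∘ s) (k + 1)⟫_ℝ
        = ⟪centredSum c g k, centredSum c (gs ∘ s) k⟫_ℝ
          + ⟪centredSum c g k, gs (s k) - c⟫_ℝ
          + ⟪g k - c, centredSum c (gs ∘ s) (k + 1)⟫_ℝ := by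
      rw [centredSum_succ c g, inner_add_left, centredSum_succ c (gs ∘ s), inner_add_right]
      simp only [Function.comp_apply]
    linarith

/-- Two averaged paths in the same order stay within `2 B √k` of each other. -/
theorem sq_norm_sum_sub_sum_le (hT : AntitoneFamily T B) (hg : IsAveragedPath T n s g)
    (hg' : IsAveragedPath T n s g') {k : ℕ} (hk : k ≤ n) :
    ‖∑ i ∈ Finset.range k, g i - ∑ i ∈ Finset.range k, g' i‖ ^ 2 ≤ 4 * B ^ 2 * k := by
  induction k with
  | zero => simp
  | succ k ih =>
    have hkn : k < n := by omega
    have h1 := ih hkn.le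
    set D := ∑ i ∈ Finset.range k, g i with hD
    set D' := ∑ i ∈ Finset.range k, g' i with hD'
    have h2 : ⟪D - D', g k - g' k⟫_ℝ ≤ 0 := by
      rcases Nat.eq_zero_or_pos k with rfl | h0
      · simp [hD, hD']
      have hk0 : (0 : ℝ) < k := by exact_mod_cast h0
      have h := hT.inner_nonpos _ _ _ _ _ (hg k hkn) (hg' k hkn)
      rw [← smul_sub, inner_smul_right, real_inner_comm] at h
      exact nonpos_of_mul_nonpos_right h (by positivity)
    have h3 := sq_norm_sub_le_four (hT.norm_le _ _ _ (hg k hkn)) (hT.norm_le _ _ _ (hg' k hkn))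
    rw [Finset.sum_range_succ, Finset.sum_range_succ, add_sub_add_comm, norm_add_sq_real]
    push_cast
    linarith

end AntitoneFamily

end AveragedPaths

section RandomOrder

theorem sum_perm_apply_eq {n : ℕ} (φ : Fin n → ℝ) (j : Fin n) :
    n * ∑ σ : Equiv.Perm (Fin n), φ (σ j) = n.factorial * ∑ i, φ i := by
  have h1 : ∀ l, ∑ σ : Equiv.Perm (Fin n), φ (σ l) = ∑ σ : Equiv.Perm (Fin n), φ (σ j) := by
    intro l
    rw [← Equiv.sum_comp (Equiv.mulRight (Equiv.swap j l))]
    simp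
  have h2 : ∑ l, ∑ σ : Equiv.Perm (Fin n), φ (σ l) = n * ∑ σ : Equiv.Perm (Fin n), φ (σ j) := by
    simp [h1]
  rw [← h2, Finset.sum_comm]
  simp [Equiv.sum_comp, Fintype.card_perm]

variable {E : Type*} [NormedAddCommGroup E] {n : ℕ} [NeZero n]

/-- The order of visit given by a permutation, extended periodically to `ℕ`. -/
def visit (σ : Equiv.Perm (Fin n)) (k : ℕ) : Fin n := σ (Fin.ofNat n k)

theorem sum_range_visit (a : Fin n → E) (σ : Equiv.Perm (Fin n)) :
    ∑ i ∈ Finset.range n, a (visit σ i) = ∑ i, a i := by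
  rw [Finset.sum_range, ← Equiv.sum_comp σ a]
  simp [visit]

theorem centredSum_visit_self {c : E} {gs : Fin n → E} (hc : ∑ i, (gs i - c) = 0)
    (σ : Equiv.Perm (Fin n)) : centredSum c (gs ∘ visit σ) n = 0 := by
  rw [← hc, ← sum_range_visit _ σ]
  rfl

theorem centredSum_congr_visit {c : E} {gs : Fin n → E} {σ τ : Equiv.Perm (Fin n)} {k : ℕ}
    (h : ∀ i < k, visit σ i = visit τ i) :
    centredSum c (gs ∘ visit σ) k = centredSum c (gs ∘ visit τ) k :=
  Finset.sum_congr rfl fun i hi => by simp [h i (Finset.mem_range.1 hi)]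

variable [InnerProductSpace ℝ E]

/-- For a uniformly random order, a quantity `Z` depending on the first `k` visits only, and
vectors summing to zero, the `k`-th visited vector has conditional mean given by the average of
the remaining ones. -/
theorem sum_inner_visit_of_predictable {k : ℕ} (hk : k < n) {Z : Equiv.Perm (Fin n) → E}
    (hZ : ∀ σ τ, (∀ i < k, visit σ i = visit τ i) → Z σ = Z τ) {c : E} {gs : Fin n → E}
    (hc : ∑ i, (gs i - c) = 0) :
    ((n : ℝ) - k) * ∑ σ, ⟪Z σ, gs (visit σ k) - c⟫_ℝ
      = -∑ σ, ⟪Z σ, centredSum c (gs ∘ visit σ) k⟫_ℝ := by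
  have h1 : ∀ l ∈ Finset.Ico k n, ∑ σ, ⟪Z σ, gs (visit σ l) - c⟫_ℝ
      = ∑ σ, ⟪Z σ, gs (visit σ k) - c⟫_ℝ := by
    intro l hl
    obtain ⟨hkl, hln⟩ := Finset.mem_Ico.1 hl
    rw [← Equiv.sum_comp (Equiv.mulRight (Equiv.swap (Fin.ofNat n k) (Fin.ofNat n l)))]
    refine Finset.sum_congr rfl fun σ _ => ?_
    have h : Z (Equiv.mulRight (Equiv.swap (Fin.ofNat n k) (Fin.ofNat n l)) σ) = Z σ := by
      apply hZ
      intro i hi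
      simp only [visit, Equiv.coe_mulRight, Equiv.Perm.coe_mul, Function.comp_apply]
      rw [Equiv.swap_apply_of_ne_of_ne] <;>
      · intro h
        have := congrArg Fin.val h
        simp only [Fin.val_ofNat] at this
        rw [Nat.mod_eq_of_lt, Nat.mod_eq_of_lt] at this <;> omega
    rw [h]
    simp [visit]
  have h2 : ∑ l ∈ Finset.Ico k n, ∑ σ, ⟪Z σ, gs (visit σ l) - c⟫_ℝ
      = ((n : ℝ) - k) * ∑ σ, ⟪Z σ, gs (visit σ k) - c⟫_ℝ := by
    rw [Finset.sum_congr rfl h1]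
    simp [Nat.cast_sub hk.le]
  rw [← h2, Finset.sum_comm, ← Finset.sum_neg_distrib]
  refine Finset.sum_congr rfl fun σ _ => ?_
  rw [← inner_sum, ← inner_neg_right, Finset.sum_Ico_eq_sub _ hk.le,
    sum_range_visit (fun i => gs i - c), hc, zero_sub]
  rfl

/-- Variance of sampling without replacement. -/
theorem sum_sq_centredSum_visit {c : E} {gs : Fin n → E} (hc : ∑ i, (gs i - c) = 0) {k : ℕ}
    (hk : k ≤ n) :
    ((n : ℝ) - 1) * n * ∑ σ, ‖centredSum c (gs ∘ visit σ) k‖ ^ 2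
      = k * (n - k) * (n.factorial * ∑ i, ‖gs i - c‖ ^ 2) := by
  induction k with
  | zero => simp [centredSum_zero]
  | succ k ih =>
    have h1 := ih (by omega)
    have h2 := sum_inner_visit_of_predictable (k := k) (by omega)
      (Z := fun σ => centredSum c (gs ∘ visit σ) k) (fun σ τ h => centredSum_congr_visit h) hc
    have h3 := sum_perm_apply_eq (fun i => ‖gs i - c‖ ^ 2) (Fin.ofNat n k)
    simp only [real_inner_self_eq_norm_sq] at h2
    have h4 : ∑ σ, ‖centredSum c (gs ∘ visit σ) (k + 1)‖ ^ 2
        = ∑ σ, ‖centredSum c (gs ∘ visit σ) k‖ ^ 2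
          + 2 * ∑ σ, ⟪centredSum c (gs ∘ visit σ) k, gs (visit σ k) - c⟫_ℝ
          + ∑ σ : Equiv.Perm (Fin n), ‖gs (σ (Fin.ofNat n k)) - c‖ ^ 2 := by
      rw [Finset.mul_sum, ← Finset.sum_add_distrib, ← Finset.sum_add_distrib]
      refine Finset.sum_congr rfl fun σ _ => ?_
      rw [centredSum_succ, norm_add_sq_real]
      rfl
    have hnk : (n : ℝ) - k ≠ 0 := by
      have : (k : ℝ) + 1 ≤ n := by exact_mod_cast hk
      linarith
    rw [h4, ← mul_right_inj' hnk]
    push_cast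
    linear_combination ((n : ℝ) - k - 2) * h1 + 2 * ((n : ℝ) - 1) * n * h2
      + ((n : ℝ) - 1) * (n - k) * h3

theorem sum_sq_sub_mean_le {B : ℝ} {c : E} {gs : Fin n → E} (hc : ∑ i, (gs i - c) = 0)
    (hB : ∀ i, ‖gs i‖ ≤ B) : ∑ i, ‖gs i - c‖ ^ 2 ≤ n * B ^ 2 := by
  have h1 := sum_sq_sub_le (B := B) c (gs ∘ visit 1) n fun i _ => hB _
  rw [centredSum_visit_self hc] at h1
  have h2 := sum_range_visit (fun i => ‖gs i - c‖ ^ 2) 1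
  simp only [Function.comp_apply] at h1
  rw [h2] at h1
  simpa using h1

theorem sum_sq_centredSum_visit_le {B : ℝ} {c : E} {gs : Fin n → E} (hc : ∑ i, (gs i - c) = 0)
    (hB : ∀ i, ‖gs i‖ ≤ B) {k : ℕ} (hk : k ≤ n) (hn : 2 ≤ n) :
    ∑ σ, ‖centredSum c (gs ∘ visit σ) k‖ ^ 2
      ≤ k * (n - k) / (n - 1) * (n.factorial * B ^ 2) := by
  have h1 := sum_sq_centredSum_visit hc hk
  have h2 := sum_sq_sub_mean_le hc hB
  have hn' : (2 : ℝ) ≤ n := by exact_mod_cast hn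
  have hk' : (k : ℝ) ≤ n := by exact_mod_cast hk
  have h3 : (k : ℝ) * (n - k) * (n.factorial * ∑ i, ‖gs i - c‖ ^ 2)
      ≤ k * (n - k) * (n.factorial * (n * B ^ 2)) := by
    have : 0 ≤ (k : ℝ) * (n - k) := mul_nonneg (by positivity) (by linarith)
    gcongr
  rw [← h1] at h3
  have h4 : (0 : ℝ) < (n - 1) * n := by nlinarith
  rw [div_mul_eq_mul_div, le_div_iff₀ (by linarith)]
  nlinarith

end RandomOrder

section Expectation

theorem sum_range_mul_sub (N : ℝ) (m : ℕ) :
    ∑ i ∈ Finset.range m, ((i + 1 : ℕ) : ℝ) * (N - (i + 1 : ℕ))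
      = N * (m * (m + 1)) / 2 - m * (m + 1) * (2 * m + 1) / 6 := by
  induction m with
  | zero => simp
  | succ m ih => rw [Finset.sum_range_succ, ih]; push_cast; ring

variable {E : Type*} [NormedAddCommGroup E] [InnerProductSpace ℝ E] {n : ℕ} [NeZero n]
  {T : Fin n → E → E → Prop} {B : ℝ} {c : E} {gs : Fin n → E} {g : Equiv.Perm (Fin n) → ℕ → E}

namespace AntitoneFamily

/-- Mean energy of averaged paths in random order. The path may depend on the whole order, not
only on the part already visited. -/
theorem sum_sq_centredSum_le (hT : AntitoneFamily T B) (hgs : ∀ i, T i c (gs i))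
    (hc : ∑ i, (gs i - c) = 0) (hg : ∀ σ, IsAveragedPath T n (visit σ) (g σ)) (hn : 2 ≤ n)
    {θ : ℝ} (hθ : 0 < θ) :
    ∑ σ, ‖centredSum c (g σ) n‖ ^ 2 ≤ ∑ σ, ∑ i ∈ Finset.range n, ‖g σ i - c‖ ^ 2
      + θ * ∑ σ, ∑ i ∈ Finset.range (n - 1), ‖g σ i - c‖ ^ 2
      + θ⁻¹ * (n * (n + 1) / 6 * (n.factorial * B ^ 2)) := by
  have hn1 : (0 : ℝ) < n - 1 := by
    have : (2 : ℝ) ≤ n := by exact_mod_cast hn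
    linarith
  have key : ∀ σ, ‖centredSum c (g σ) n‖ ^ 2 ≤ ∑ i ∈ Finset.range n, ‖g σ i - c‖ ^ 2
      + θ * ∑ i ∈ Finset.range (n - 1), ‖g σ i - c‖ ^ 2
      + θ⁻¹ * ∑ i ∈ Finset.range n, ‖centredSum c (gs ∘ visit σ) (i + 1)‖ ^ 2 := by
    intro σ
    have h1 := hT.sq_centredSum_sub_le (hg σ) hgs le_rfl
    rw [centredSum_visit_self hc, inner_zero_right, mul_zero, sub_zero,
      Finset.sum_sub_distrib] at h1
    have h2 : ∀ i, -(2 * ⟪g σ i - c, centredSum c (gs ∘ visit σ) (i + 1)⟫_ℝ)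
        ≤ θ * ‖g σ i - c‖ ^ 2 + θ⁻¹ * ‖centredSum c (gs ∘ visit σ) (i + 1)‖ ^ 2 := by
      intro i
      have ha := abs_le.1 (abs_real_inner_le_norm (g σ i - c) (centredSum c (gs ∘ visit σ) (i + 1)))
      have hb : 0 ≤ θ * (‖g σ i - c‖ - θ⁻¹ * ‖centredSum c (gs ∘ visit σ) (i + 1)‖) ^ 2 := by
        positivity
      have hd : θ * (‖g σ i - c‖ - θ⁻¹ * ‖centredSum c (gs ∘ visit σ) (i + 1)‖) ^ 2
          = θ * ‖g σ i - c‖ ^ 2 + θ⁻¹ * ‖centredSum c (gs ∘ visit σ) (i + 1)‖ ^ 2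
            - 2 * (‖g σ i - c‖ * ‖centredSum c (gs ∘ visit σ) (i + 1)‖) := by
        field_simp
        ring
      linarith [ha.1]
    have h3 : -∑ i ∈ Finset.range n, 2 * ⟪g σ i - c, centredSum c (gs ∘ visit σ) (i + 1)⟫_ℝ
        ≤ θ * ∑ i ∈ Finset.range (n - 1), ‖g σ i - c‖ ^ 2
          + θ⁻¹ * ∑ i ∈ Finset.range n, ‖centredSum c (gs ∘ visit σ) (i + 1)‖ ^ 2 := by
      have hlast : centredSum c (gs ∘ visit σ) (n - 1 + 1) = 0 := by
        rw [show n - 1 + 1 = n by omega, centredSum_visit_self hc]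
      rw [show Finset.range n = Finset.range (n - 1 + 1) by congr 1; omega,
        Finset.sum_range_succ, Finset.sum_range_succ, hlast, inner_zero_right, norm_zero]
      have := Finset.sum_le_sum fun i (_ : i ∈ Finset.range (n - 1)) => h2 i
      rw [Finset.sum_add_distrib, ← Finset.mul_sum, ← Finset.mul_sum, Finset.sum_neg_distrib] at this
      simpa using this
    linarith
  have hM : ∑ σ, ∑ i ∈ Finset.range n, ‖centredSum c (gs ∘ visit σ) (i + 1)‖ ^ 2
      ≤ n * (n + 1) / 6 * (n.factorial * B ^ 2) := by
    rw [Finset.sum_comm]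
    calc _ ≤ ∑ i ∈ Finset.range n, ((i + 1 : ℕ) : ℝ) * (n - (i + 1 : ℕ)) / (n - 1)
            * (n.factorial * B ^ 2) := Finset.sum_le_sum fun i hi =>
          sum_sq_centredSum_visit_le hc (fun i => hT.norm_le _ _ _ (hgs i))
            (by have := Finset.mem_range.1 hi; omega) hn
      _ = _ := by
          rw [← Finset.sum_mul, ← Finset.sum_div, sum_range_mul_sub]
          field_simp
          ring
  have := Finset.sum_le_sum fun σ (_ : σ ∈ Finset.univ) => key σ
  rw [Finset.sum_add_distrib, Finset.sum_add_distrib, ← Finset.mul_sum, ← Finset.mul_sum] at this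
  have hθ' : 0 < θ⁻¹ := by positivity
  nlinarith

theorem norm_centre_le (hT : AntitoneFamily T B) (hgs : ∀ i, T i c (gs i))
    (hc : ∑ i, (gs i - c) = 0) : ‖c‖ ≤ B := by
  have hn : (0 : ℝ) < n := by exact_mod_cast NeZero.pos n
  have h1 : (n : ℝ) • c = ∑ i, gs i := by
    rw [Finset.sum_sub_distrib, sub_eq_zero] at hc
    simp [hc, Nat.cast_smul_eq_nsmul]
  have h2 : n * ‖c‖ ≤ n * B := by
    calc n * ‖c‖ = ‖(n : ℝ) • c‖ := by simp [norm_smul]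
      _ ≤ ∑ i : Fin n, B := by
          rw [h1]
          exact norm_sum_le_of_le _ fun i _ => hT.norm_le _ _ _ (hgs i)
      _ = n * B := by simp
  exact le_of_mul_le_mul_left h2 hn

theorem sum_sum_sq_le_four_mul (hT : AntitoneFamily T B) (hgs : ∀ i, T i c (gs i))
    (hc : ∑ i, (gs i - c) = 0) (hg : ∀ σ, IsAveragedPath T n (visit σ) (g σ)) {k : ℕ}
    (hk : k ≤ n) :
    ∑ σ, ∑ i ∈ Finset.range k, ‖g σ i - c‖ ^ 2 ≤ 4 * k * (n.factorial * B ^ 2) := by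
  calc _ ≤ ∑ σ : Equiv.Perm (Fin n), ∑ i ∈ Finset.range k, 4 * B ^ 2 :=
        Finset.sum_le_sum fun σ _ => Finset.sum_le_sum fun i hi =>
          sq_norm_sub_le_four
            (hT.norm_le _ _ _ (hg σ i ((Finset.mem_range.1 hi).trans_le hk)))
            (hT.norm_centre_le hgs hc)
    _ = _ := by
        simp [Fintype.card_perm]
        ring

theorem sum_sum_sq_le_add (hT : AntitoneFamily T B)
    (hg : ∀ σ, IsAveragedPath T n (visit σ) (g σ)) {k : ℕ} (hk : k ≤ n) :
    ∑ σ, ∑ i ∈ Finset.range k, ‖g σ i - c‖ ^ 2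
      ≤ k * (n.factorial * B ^ 2) + (∑ σ, ‖centredSum c (g σ) k‖ ^ 2) / k := by
  calc _ ≤ ∑ σ : Equiv.Perm (Fin n), (k * B ^ 2 + ‖centredSum c (g σ) k‖ ^ 2 / k) :=
        Finset.sum_le_sum fun σ _ => sum_sq_sub_le _ _ _ fun i hi =>
          hT.norm_le _ _ _ (hg σ i (hi.trans_le hk))
    _ = _ := by
        rw [Finset.sum_add_distrib, Finset.sum_div]
        simp [Fintype.card_perm]
        ring

theorem sum_sq_centredSum_le_of_le_three (hT : AntitoneFamily T B) (hgs : ∀ i, T i c (gs i))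
    (hc : ∑ i, (gs i - c) = 0) (hg : ∀ σ, IsAveragedPath T n (visit σ) (g σ)) (hn : n ≤ 3) :
    ∑ σ, ‖centredSum c (g σ) n‖ ^ 2
      ≤ 4 * n * (Real.log n + 1) * (n.factorial * B ^ 2) := by
  have hn0 := NeZero.pos n
  have hD : 0 ≤ n.factorial * B ^ 2 := by positivity
  have h4 := hT.sum_sum_sq_le_four_mul hgs hc hg le_rfl
  obtain rfl | hn2 : n = 1 ∨ 2 ≤ n := by omega
  · simp only [Finset.range_one, Finset.sum_singleton] at h4
    simpa [centredSum] using h4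
  have h3 := hT.sum_sum_sq_le_four_mul hgs hc hg (k := n - 1) (by omega)
  have h := hT.sum_sq_centredSum_le hgs hc hg hn2 (θ := 1 / 2) (by norm_num)
  rw [Nat.cast_sub hn0] at h3
  have hlog : 0.6931 ≤ Real.log n :=
    (by linarith [Real.log_two_gt_d9] : 0.6931 ≤ Real.log 2).trans
      (Real.log_le_log (by norm_num) (by exact_mod_cast hn2))
  have hn2' : (2 : ℝ) ≤ n := by exact_mod_cast hn2
  have hn3' : (n : ℝ) ≤ 3 := by exact_mod_cast hn
  refine (h.trans (c := (4 * n + 1 / 2 * (4 * (n - 1)) + 2 * (n * (n + 1) / 6))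
    * (n.factorial * B ^ 2)) ?_).trans (mul_le_mul_of_nonneg_right ?_ hD)
  · push_cast at h3
    norm_num
    linarith
  · nlinarith

theorem sum_sq_centredSum_le_of_dyadic (hT : AntitoneFamily T B) (hgs : ∀ i, T i c (gs i))
    (hc : ∑ i, (gs i - c) = 0) (hg : ∀ σ, IsAveragedPath T n (visit σ) (g σ)) (m : ℕ) (θ : ℝ)
    (hm : 2 ^ m ≤ n) (hn : 2 ≤ n) (hθ : 0 < θ) (hθn : θ + 1 < n)
    (hnum : (1 + θ) * n + n * (n + 1) / (6 * θ) ≤ 4 * (0.6931 * m + 1) * (n - 1 - θ)) :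
    ∑ σ, ‖centredSum c (g σ) n‖ ^ 2
      ≤ 4 * n * (Real.log n + 1) * (n.factorial * B ^ 2) := by
  have hn0 : (0 : ℝ) < n := by exact_mod_cast NeZero.pos n
  set D := n.factorial * B ^ 2 with hDdef
  have hD : 0 ≤ D := by positivity
  set Q := ∑ σ, ‖centredSum c (g σ) n‖ ^ 2 with hQ
  have hS := hT.sum_sum_sq_le_add (c := c) hg le_rfl
  have h := hT.sum_sq_centredSum_le hgs hc hg hn hθ
  have hle : ∑ σ, ∑ i ∈ Finset.range (n - 1), ‖g σ i - c‖ ^ 2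
      ≤ ∑ σ, ∑ i ∈ Finset.range n, ‖g σ i - c‖ ^ 2 :=
    Finset.sum_le_sum fun σ _ => Finset.sum_le_sum_of_subset_of_nonneg
      (Finset.range_mono (by omega)) fun _ _ _ => by positivity
  have hlog : 0.6931 * m ≤ Real.log n := by
    have h1 : Real.log ((2 : ℝ) ^ m) ≤ Real.log n :=
      Real.log_le_log (by positivity) (by exact_mod_cast hm)
    rw [Real.log_pow] at h1
    have h2 : (0 : ℝ) ≤ m := by positivity
    nlinarith [Real.log_two_gt_d9]
  rw [← hQ, ← hDdef] at hS h
  have h1 : Q ≤ (1 + θ) * (n * D + Q / n) + n * (n + 1) / (6 * θ) * D := by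
    have e : θ⁻¹ * (n * (n + 1) / 6 * D) = n * (n + 1) / (6 * θ) * D := by field_simp
    rw [e] at h
    nlinarith
  have h2 : Q * (n - 1 - θ) ≤ n * ((1 + θ) * n + n * (n + 1) / (6 * θ)) * D := by
    have e : Q / n * n = Q := by field_simp
    nlinarith
  have h3 : n * ((1 + θ) * n + n * (n + 1) / (6 * θ)) * D
      ≤ n * (4 * (0.6931 * m + 1) * (n - 1 - θ)) * D := by gcongr
  have h4 : Q * (n - 1 - θ) ≤ (n * (4 * (0.6931 * m + 1)) * D) * (n - 1 - θ) := by linarith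
  have h5 := le_of_mul_le_mul_right h4 (by linarith)
  refine h5.trans ?_
  have : n * (4 * (0.6931 * m + 1)) * D = 4 * n * (0.6931 * m + 1) * D := by ring
  rw [this]
  gcongr

theorem sum_sq_centredSum_le_of_lt (hT : AntitoneFamily T B) (hgs : ∀ i, T i c (gs i))
    (hc : ∑ i, (gs i - c) = 0) (hg : ∀ σ, IsAveragedPath T n (visit σ) (g σ)) (hn : n < 1024) :
    ∑ σ, ‖centredSum c (g σ) n‖ ^ 2
      ≤ 4 * n * (Real.log n + 1) * (n.factorial * B ^ 2) := by
  have dyadic : ∀ (m : ℕ) (θ a b : ℝ), 2 ^ m ≤ n → 2 ≤ n → 0 < θ → a ≤ n → (n : ℝ) ≤ b →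
      θ + 1 < a → (1 + θ) * a + a * (b + 1) / (6 * θ) ≤ 4 * (0.6931 * m + 1) * (a - 1 - θ) →
      (1 + θ) + (b + 1) / (6 * θ) ≤ 4 * (0.6931 * m + 1) →
      ∑ σ, ‖centredSum c (g σ) n‖ ^ 2
        ≤ 4 * n * (Real.log n + 1) * (n.factorial * B ^ 2) := by
    intro m θ a b h1 h2 h3 h4 h5 h6 h7 h8
    refine hT.sum_sq_centredSum_le_of_dyadic hgs hc hg m θ h1 h2 h3 (by linarith) ?_
    have h9 : n * ((n : ℝ) + 1) / (6 * θ) ≤ n * ((b + 1) / (6 * θ)) := by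
      rw [mul_div_assoc]
      gcongr
    have h10 : a * (b + 1) / (6 * θ) = a * ((b + 1) / (6 * θ)) := by ring
    rw [h10] at h7
    nlinarith
  have cast_le : ∀ a b : ℕ, a ≤ n → n ≤ b → (a : ℝ) ≤ n ∧ (n : ℝ) ≤ b := fun a b h1 h2 =>
    ⟨by exact_mod_cast h1, by exact_mod_cast h2⟩
  rcases le_or_gt n 3 with h | h
  · exact hT.sum_sq_centredSum_le_of_le_three hgs hc hg h
  rcases le_or_gt n 7 with h' | h'
  · obtain ⟨h1, h2⟩ := cast_le 4 7 h h'
    exact dyadic 2 1 4 7 (by omega) (by omega) (by norm_num) h1 h2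
      (by norm_num) (by norm_num) (by norm_num)
  rcases le_or_gt n 15 with h | h
  · obtain ⟨h1, h2⟩ := cast_le 8 15 h' h
    exact dyadic 3 1.5 8 15 (by omega) (by omega) (by norm_num) h1 h2
      (by norm_num) (by norm_num) (by norm_num)
  rcases le_or_gt n 31 with h' | h'
  · obtain ⟨h1, h2⟩ := cast_le 16 31 h h'
    exact dyadic 4 2 16 31 (by omega) (by omega) (by norm_num) h1 h2
      (by norm_num) (by norm_num) (by norm_num)
  rcases le_or_gt n 127 with h | h
  · obtain ⟨h1, h2⟩ := cast_le 32 127 h' h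
    exact dyadic 5 4 32 127 (by omega) (by omega) (by norm_num) h1 h2
      (by norm_num) (by norm_num) (by norm_num)
  rcases le_or_gt n 255 with h' | h'
  · obtain ⟨h1, h2⟩ := cast_le 128 255 h h'
    exact dyadic 7 6 128 255 (by omega) (by omega) (by norm_num) h1 h2
      (by norm_num) (by norm_num) (by norm_num)
  rcases le_or_gt n 511 with h | h
  · obtain ⟨h1, h2⟩ := cast_le 256 511 h' h
    exact dyadic 8 9 256 511 (by omega) (by omega) (by norm_num) h1 h2
      (by norm_num) (by norm_num) (by norm_num)
  · obtain ⟨h1, h2⟩ := cast_le 512 1023 h (by omega)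
    exact dyadic 9 12 512 1023 (by omega) (by omega) (by norm_num) h1 h2
      (by norm_num) (by norm_num) (by norm_num)

end AntitoneFamily

end Expectation

section Comparator

theorem sum_div_sqrt_sub_le {n k : ℕ} (hk : k ≤ n) :
    ∑ j ∈ Finset.range k, (j : ℝ) / √(n - j) ≤ 4 / 3 * k * √n := by
  have step : ∀ k ≤ n, ∑ j ∈ Finset.range k, (j : ℝ) / √(n - j)
      ≤ 4 / 3 * √n ^ 3 - 2 * n * √(n - k) + 2 / 3 * √(n - k) ^ 3 := by
    intro k
    induction k with
    | zero =>
      intro _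
      have : √(n : ℝ) ^ 3 = n * √n := by rw [pow_succ, Real.sq_sqrt (by positivity)]
      simp only [Finset.range_zero, Finset.sum_empty, Nat.cast_zero, sub_zero, this]
      linarith
    | succ k ih =>
      intro hk
      have hk' : (k : ℝ) + 1 ≤ n := by exact_mod_cast hk
      rw [Finset.sum_range_succ]
      refine (add_le_add_left (ih (by omega)) _).trans ?_
      have ha : 0 < √((n : ℝ) - k) := Real.sqrt_pos.2 (by linarith)
      have ha2 : √((n : ℝ) - k) ^ 2 = n - k := Real.sq_sqrt (by linarith)
      have hb2 : √((n : ℝ) - (k + 1 : ℕ)) ^ 2 = n - k - 1 := by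
        rw [Real.sq_sqrt] <;> push_cast <;> linarith
      have hb : 0 ≤ √((n : ℝ) - (k + 1 : ℕ)) := Real.sqrt_nonneg _
      have hba : √((n : ℝ) - (k + 1 : ℕ)) ≤ √((n : ℝ) - k) :=
        Real.sqrt_le_sqrt (by push_cast; linarith)
      generalize √((n : ℝ) - (k + 1 : ℕ)) = b at *
      generalize √((n : ℝ) - k) = a at *
      have hn0 : (0 : ℝ) ≤ n := by positivity
      have hka : (k : ℝ) = n - a ^ 2 := by linarith
      have hab : (a - b) * (a + b) = 1 := by nlinarith
      have h1 : (k : ℝ) * (a + b) ≤ a * (2 * n - 2 / 3 * (a ^ 2 + a * b + b ^ 2)) := by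
        rw [hka]
        nlinarith [mul_nonneg hn0 (sub_nonneg.2 hba), mul_nonneg (sub_nonneg.2 hba) ha.le,
          mul_nonneg (mul_nonneg (sub_nonneg.2 hba) ha.le) hb,
          mul_nonneg (mul_nonneg (sub_nonneg.2 hba) ha.le) ha.le]
      have h2 : (k : ℝ) / a ≤ (a - b) * (2 * n - 2 / 3 * (a ^ 2 + a * b + b ^ 2)) := by
        rw [div_le_iff₀ ha]
        calc (k : ℝ) = (a - b) * (k * (a + b)) := by linear_combination -(k : ℝ) * hab
          _ ≤ (a - b) * (a * (2 * n - 2 / 3 * (a ^ 2 + a * b + b ^ 2))) :=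
              mul_le_mul_of_nonneg_left h1 (sub_nonneg.2 hba)
          _ = _ := by ring
      nlinarith
  refine (step k hk).trans ?_
  have hk' : (k : ℝ) ≤ n := by exact_mod_cast hk
  have hr : 0 ≤ √((n : ℝ) - k) := Real.sqrt_nonneg _
  have hr2 : √((n : ℝ) - k) ^ 2 = n - k := Real.sq_sqrt (by linarith)
  have hs2 : √(n : ℝ) ^ 2 = n := Real.sq_sqrt (by positivity)
  have hrs : √((n : ℝ) - k) ≤ √n := Real.sqrt_le_sqrt (by linarith [k.cast_nonneg (α := ℝ)])
  generalize √((n : ℝ) - k) = r at *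
  generalize √(n : ℝ) = s at *
  have hks : (k : ℝ) = s ^ 2 - r ^ 2 := by linarith
  rw [hks, ← hs2]
  nlinarith [mul_nonneg hr (mul_nonneg (sub_nonneg.2 hrs) hr),
    mul_nonneg hr (mul_nonneg (sub_nonneg.2 hrs) (hr.trans hrs))]

variable {E ι : Type*} [NormedAddCommGroup E] [InnerProductSpace ℝ E]

/-- Sums of the averaged path that follows the selection `sel`. -/
def selectionSum (sel : ι → E → E) (s : ℕ → ι) : ℕ → E
  | 0 => 0
  | k + 1 => selectionSum sel s k + sel (s k) ((k : ℝ)⁻¹ • selectionSum sel s k)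

/-- The averaged path that follows the selection `sel`. -/
def selectionPath (sel : ι → E → E) (s : ℕ → ι) (k : ℕ) : E :=
  sel (s k) ((k : ℝ)⁻¹ • selectionSum sel s k)

theorem sum_selectionPath (sel : ι → E → E) (s : ℕ → ι) (k : ℕ) :
    ∑ i ∈ Finset.range k, selectionPath sel s i = selectionSum sel s k := by
  induction k with
  | zero => rfl
  | succ k ih => rw [Finset.sum_range_succ, ih]; rfl

theorem isAveragedPath_selectionPath {T : ι → E → E → Prop} {sel : ι → E → E}
    (hsel : ∀ i v, T i v (sel i v)) (n : ℕ) (s : ℕ → ι) :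
    IsAveragedPath T n s (selectionPath sel s) := by
  intro k _
  rw [sum_selectionPath]
  exact hsel _ _

theorem selectionSum_congr (sel : ι → E → E) {s t : ℕ → ι} {k : ℕ} (h : ∀ i < k, s i = t i) :
    selectionSum sel s k = selectionSum sel t k := by
  induction k with
  | zero => rfl
  | succ k ih =>
    simp only [selectionSum]
    rw [ih fun i hi => h i (by omega), h k (by omega)]

namespace AntitoneFamily

variable {n : ℕ} [NeZero n] {T : Fin n → E → E → Prop} {B : ℝ} {c : E} {gs : Fin n → E}
  {g : Equiv.Perm (Fin n) → ℕ → E}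

/-- The conditional drift of a predictable path. -/
theorem two_mul_sum_inner_le (hT : AntitoneFamily T B) (hgs : ∀ i, T i c (gs i))
    (hc : ∑ i, (gs i - c) = 0) (hn : 2 ≤ n) {j : ℕ} (hj : j < n)
    (hpred : ∀ σ τ, (∀ i < j, visit σ i = visit τ i) →
      centredSum c (g σ) j = centredSum c (g τ) j)
    (hq : ∑ σ, ‖centredSum c (g σ) j‖ ^ 2 ≤ 12.96 * j * (n.factorial * B ^ 2)) :
    2 * ∑ σ, ⟪centredSum c (g σ) j, gs (visit σ j) - c⟫_ℝ
      ≤ 7.2 * (n.factorial * B ^ 2) / √(n - 1) * (j / √(n - j)) := by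
  have h1 := sum_inner_visit_of_predictable hj hpred hc
  have h2 := sum_sq_centredSum_visit_le hc (fun i => hT.norm_le _ _ _ (hgs i)) hj.le hn
  have hD : 0 ≤ n.factorial * B ^ 2 := by positivity
  have h3 := Finset.sum_mul_sq_le_sq_mul_sq Finset.univ (fun σ => ‖centredSum c (g σ) j‖)
    fun σ => ‖centredSum c (gs ∘ visit σ) j‖
  have h4 : -∑ σ, ⟪centredSum c (g σ) j, centredSum c (gs ∘ visit σ) j⟫_ℝ
      ≤ ∑ σ, ‖centredSum c (g σ) j‖ * ‖centredSum c (gs ∘ visit σ) j‖ := by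
    rw [← Finset.sum_neg_distrib]
    exact Finset.sum_le_sum fun σ _ => by
      linarith [(abs_le.1 (abs_real_inner_le_norm (centredSum c (g σ) j)
        (centredSum c (gs ∘ visit σ) j))).1]
  have hj' : (j : ℝ) + 1 ≤ n := by exact_mod_cast hj
  have hn' : (2 : ℝ) ≤ n := by exact_mod_cast hn
  have hr : 0 < √((n : ℝ) - j) := Real.sqrt_pos.2 (by linarith)
  have hs : 0 < √((n : ℝ) - 1) := Real.sqrt_pos.2 (by linarith)
  have hr2 : (n : ℝ) - j = √((n : ℝ) - j) ^ 2 := (Real.sq_sqrt (by linarith)).symm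
  have hs2 : (n : ℝ) - 1 = √((n : ℝ) - 1) ^ 2 := (Real.sq_sqrt (by linarith)).symm
  rw [← h1] at h4
  generalize √((n : ℝ) - j) = r at *
  generalize √((n : ℝ) - 1) = s at *
  rw [hr2] at h4
  rw [hr2, hs2] at h2
  generalize (n.factorial * B ^ 2 : ℝ) = D at *
  generalize ∑ σ, ⟪centredSum c (g σ) j, gs (visit σ j) - c⟫_ℝ = S at *
  have h5 : (∑ σ, ‖centredSum c (g σ) j‖ * ‖centredSum c (gs ∘ visit σ) j‖) ^ 2
      ≤ (3.6 * j * D * r / s) ^ 2 := by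
    calc _ ≤ _ := h3
      _ ≤ (12.96 * j * D) * (j * r ^ 2 / s ^ 2 * D) := by gcongr
      _ = _ := by ring
  have h6 := h4.trans (abs_le_of_sq_le_sq' h5 (by positivity)).2
  have h7 : S ≤ 3.6 * j * D / (s * r) := by
    rw [le_div_iff₀ (by positivity)]
    rw [le_div_iff₀ hs] at h6
    have : (S * (s * r)) * r ≤ (3.6 * j * D) * r := by linarith
    exact le_of_mul_le_mul_right this hr
  calc 2 * S ≤ 2 * (3.6 * j * D / (s * r)) := by linarith
    _ = _ := by field_simp; norm_num; ring

theorem sum_sq_centredSum_le_of_predictable (hT : AntitoneFamily T B)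
    (hgs : ∀ i, T i c (gs i)) (hc : ∑ i, (gs i - c) = 0)
    (hg : ∀ σ, IsAveragedPath T n (visit σ) (g σ))
    (hpred : ∀ j σ τ, (∀ i < j, visit σ i = visit τ i) →
      centredSum c (g σ) j = centredSum c (g τ) j) (hn : 1024 ≤ n) {k : ℕ} (hk : k ≤ n) :
    ∑ σ, ‖centredSum c (g σ) k‖ ^ 2 ≤ 12.96 * k * (n.factorial * B ^ 2) := by
  induction k using Nat.strong_induction_on with
  | _ k ih =>
  set D := (n.factorial * B ^ 2 : ℝ) with hD
  have hD0 : 0 ≤ D := by positivity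
  have hn' : (1024 : ℝ) ≤ n := by exact_mod_cast hn
  set s := √((n : ℝ) - 1) with hs
  have hs30 : 30 ≤ s := Real.le_sqrt_of_sq_le (by linarith)
  have energy : ∀ m ≤ k, ∑ σ, ‖centredSum c (g σ) m‖ ^ 2
      ≤ ∑ σ, ∑ i ∈ Finset.range m, ‖g σ i - c‖ ^ 2
        + 7.2 * D / s * ∑ j ∈ Finset.range m, (j : ℝ) / √(n - j) := by
    intro m
    induction m with
    | zero => simp [centredSum_zero]
    | succ m ihm =>
      intro hm
      have h1 := ihm (by omega)
      have h2 := hT.two_mul_sum_inner_le hgs hc (by omega) (j := m) (by omega) (hpred m)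
        (ih m (by omega) (by omega))
      have h3 := Finset.sum_le_sum fun σ (_ : σ ∈ Finset.univ) =>
        hT.sq_centredSum_succ_le (hg σ) hgs (k := m) (by omega)
      rw [Finset.sum_add_distrib, Finset.sum_add_distrib, ← Finset.mul_sum] at h3
      simp only [Finset.sum_range_succ, Finset.sum_add_distrib]
      rw [mul_add]
      linarith
  have hk0 := energy k le_rfl
  have hcoef : 0 ≤ 7.2 * D / s := by positivity
  rcases le_or_gt k 5 with h5 | h5
  · have h1 := hT.sum_sum_sq_le_four_mul hgs hc hg hk
    have h2 : ∑ j ∈ Finset.range k, (j : ℝ) / √(n - j) ≤ k := by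
      calc _ ≤ ∑ j ∈ Finset.range k, (1 : ℝ) := by
            refine Finset.sum_le_sum fun j hj => ?_
            have hj5 : (j : ℝ) ≤ 5 := by
              exact_mod_cast (Finset.mem_range.1 hj).le.trans h5
            have : 5 ≤ √((n : ℝ) - j) := Real.le_sqrt_of_sq_le (by linarith)
            exact div_le_one_of_le₀ (by linarith) (by positivity)
        _ = k := by simp
    have h3 : 7.2 * D / s ≤ D := by
      rw [div_le_iff₀ (by positivity)]
      nlinarith
    have h4 : 7.2 * D / s * ∑ j ∈ Finset.range k, (j : ℝ) / √(n - j) ≤ D * k :=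
      mul_le_mul h3 h2 (Finset.sum_nonneg fun _ _ => by positivity) hD0
    have h6 : 0 ≤ D * k := by positivity
    linarith
  · have hk6 : (6 : ℝ) ≤ k := by exact_mod_cast h5
    have h1 := hT.sum_sum_sq_le_add (c := c) hg hk
    have h2 := mul_le_mul_of_nonneg_left (sum_div_sqrt_sub_le hk) hcoef
    have h3 : √(n : ℝ) ≤ 1.001 * s := by
      refine Real.sqrt_le_iff.2 ⟨by positivity, ?_⟩
      rw [mul_pow, hs, Real.sq_sqrt (by linarith)]
      nlinarith
    have h4 : 7.2 * D / s * (4 / 3 * k * √n) ≤ 9.6096 * k * D := by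
      calc _ ≤ 7.2 * D / s * (4 / 3 * k * (1.001 * s)) := by gcongr
        _ = _ := by field_simp; norm_num; ring
    rw [← hD] at h1
    generalize ∑ σ, ‖centredSum c (g σ) k‖ ^ 2 = q at *
    have h7 : q ≤ k * D + q / k + 9.6096 * k * D := by linarith
    have h8 : q * (k - 1) ≤ 10.6096 * k ^ 2 * D := by
      have e : q / k * k = q := by field_simp
      nlinarith
    have h9 : 10.6096 * k ^ 2 * D ≤ 12.96 * k * D * (k - 1) := by
      have : 0 ≤ (k : ℝ) * D := by positivity
      nlinarith
    exact le_of_mul_le_mul_right (h8.trans h9) (by linarith)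

/-- Averaged paths visiting the operators in uniformly random order approach the average of the
values at the fixed point. -/
theorem sum_sq_centredSum_le_log (hT : AntitoneFamily T B) (htotal : ∀ i v, ∃ g, T i v g)
    (hgs : ∀ i, T i c (gs i)) (hc : ∑ i, (gs i - c) = 0)
    (hg : ∀ σ, IsAveragedPath T n (visit σ) (g σ)) :
    ∑ σ, ‖centredSum c (g σ) n‖ ^ 2
      ≤ 4 * n * (Real.log n + 1) * (n.factorial * B ^ 2) := by
  rcases lt_or_ge n 1024 with hn | hn
  · exact hT.sum_sq_centredSum_le_of_lt hgs hc hg hn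
  choose sel hsel using htotal
  have hpath σ := isAveragedPath_selectionPath hsel n (visit σ)
  have h1 := hT.sum_sq_centredSum_le_of_predictable hgs hc hpath (fun j σ τ h => by
    rw [centredSum_eq_sub, centredSum_eq_sub, sum_selectionPath, sum_selectionPath,
      selectionSum_congr sel h]) hn le_rfl
  have h2 : ∀ σ, ‖centredSum c (g σ) n‖ ^ 2
      ≤ 14 / 9 * ‖centredSum c (selectionPath sel (visit σ)) n‖ ^ 2
        + 14 / 5 * (4 * B ^ 2 * n) := by
    intro σ
    have h3 := hT.sq_norm_sum_sub_sum_le (hg σ) (hpath σ) le_rfl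
    have h4 : centredSum c (g σ) n = centredSum c (selectionPath sel (visit σ)) n
        + (∑ i ∈ Finset.range n, g σ i
          - ∑ i ∈ Finset.range n, selectionPath sel (visit σ) i) := by
      rw [centredSum_eq_sub, centredSum_eq_sub]
      abel
    rw [h4]
    generalize centredSum c (selectionPath sel (visit σ)) n = a at *
    generalize (∑ i ∈ Finset.range n, g σ i
          - ∑ i ∈ Finset.range n, selectionPath sel (visit σ) i) = b at *
    have h5 := pow_le_pow_left₀ (norm_nonneg _) (norm_add_le a b) 2
    nlinarith [sq_nonneg (5 * ‖a‖ - 9 * ‖b‖)]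
  have h3 := Finset.sum_le_sum fun σ (_ : σ ∈ Finset.univ) => h2 σ
  rw [Finset.sum_add_distrib, ← Finset.mul_sum, Finset.sum_const, Finset.card_univ,
    Fintype.card_perm, Fintype.card_fin, nsmul_eq_mul] at h3
  have hlog : 6.931 ≤ Real.log n := by
    have h4 : Real.log ((2 : ℝ) ^ 10) ≤ Real.log n :=
      Real.log_le_log (by positivity) (by norm_num; exact_mod_cast hn)
    rw [Real.log_pow] at h4
    push_cast at h4
    linarith [Real.log_two_gt_d9]
  have h5 : 0 ≤ (n : ℝ) * (n.factorial * B ^ 2) := by positivity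
  nlinarith

end AntitoneFamily

end Comparator

section Subgradients

variable {f : ℝ → ℝ} {u v a b : ℝ}

theorem IsSubgradAt.abs_le {L : ℝ} (hf : ∀ a b, |f a - f b| ≤ L * |a - b|)
    (hu : IsSubgradAt f u a) : |u| ≤ L := by
  have h1 := hu (a + 1)
  have h2 := hu (a - 1)
  have h3 := le_of_abs_le (hf (a + 1) a)
  have h4 := le_of_abs_le (hf (a - 1) a)
  norm_num at h1 h2 h3 h4
  exact _root_.abs_le.2 ⟨by linarith, by linarith⟩

theorem IsSubgradAt.mul_sub_nonneg (hu : IsSubgradAt f u a) (hv : IsSubgradAt f v b) :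
    0 ≤ (u - v) * (a - b) := by
  linarith [hu b, hv a]

theorem ConvexOn.isSubgradAt_of_mem_Icc (hf : ConvexOn ℝ Set.univ f)
    (hu : u ∈ Set.Icc (derivWithin f (Set.Iio a) a) (derivWithin f (Set.Ioi a) a)) :
    IsSubgradAt f u a := by
  intro b
  rcases lt_trichotomy a b with hab | rfl | hab
  · have h := hu.2.trans (hf.rightDeriv_le_slope_of_mem_interior (by simp) (Set.mem_univ b) hab)
    rw [slope_def_field, le_div_iff₀ (by linarith)] at h
    linarith
  · simp
  · have h := (hf.slope_le_leftDeriv_of_mem_interior (Set.mem_univ b) (by simp) hab).trans hu.1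
    rw [slope_def_field, div_le_iff₀ (by linarith)] at h
    linarith

theorem ConvexOn.exists_isSubgradAt (hf : ConvexOn ℝ Set.univ f) (a : ℝ) :
    ∃ u, IsSubgradAt f u a :=
  ⟨_, hf.isSubgradAt_of_mem_Icc
    (Set.left_mem_Icc.2 (hf.leftDeriv_le_rightDeriv_of_mem_interior (by simp)))⟩

theorem ConvexOn.exists_hasDerivWithinAt_comp_line (hf : ConvexOn ℝ Set.univ f) (a b : ℝ) :
    ∃ u ∈ Set.Icc (derivWithin f (Set.Iio a) a) (derivWithin f (Set.Ioi a) a),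
      HasDerivWithinAt (fun t => f (a + t * b)) (u * b) (Set.Ioi 0) 0 := by
  have hle := hf.leftDeriv_le_rightDeriv_of_mem_interior (x := a) (by simp)
  have hline : HasDerivWithinAt (fun t : ℝ => a + t * b) b (Set.Ioi 0) 0 := by
    simpa using (((hasDerivAt_id (0 : ℝ)).mul_const b).const_add a).hasDerivWithinAt
  have ha : a + 0 * b = a := by ring
  rcases lt_trichotomy b 0 with hb | rfl | hb
  · refine ⟨_, Set.left_mem_Icc.2 hle, ?_⟩
    have h := hf.hasDerivWithinAt_leftDeriv_of_mem_interior (x := a) (by simp)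
    rw [← ha] at h
    have := h.comp 0 hline fun t (ht : 0 < t) => by
      simpa using mul_neg_of_pos_of_neg ht hb
    rwa [ha] at this
  · refine ⟨_, Set.left_mem_Icc.2 hle, ?_⟩
    simpa using hasDerivWithinAt_const (0 : ℝ) (Set.Ioi 0) (f a)
  · refine ⟨_, Set.right_mem_Icc.2 hle, ?_⟩
    have h := hf.hasDerivWithinAt_rightDeriv_of_mem_interior (x := a) (by simp)
    rw [← ha] at h
    have := h.comp 0 hline fun t (ht : 0 < t) => by
      simpa using mul_pos ht hb
    rwa [ha] at this

end Subgradients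

section BiasedERM

variable {d n : ℕ} {ℓ : ℝ → ℝ → ℝ} {lam : ℝ} {S : Fin n → Pt d} {h w w' : Vec d}

theorem regRisk_comp_perm (σ : Equiv.Perm (Fin n)) :
    regRisk ℓ lam (S ∘ σ) h w = regRisk ℓ lam S h w := by
  simp only [regRisk, empRisk, Function.comp_apply]
  rw [Equiv.sum_comp σ fun k => ℓ ⟪(S k).1, w⟫_ℝ (S k).2]

/-- First-order optimality conditions for the biased ERM. -/
theorem exists_subgrad_of_isMinimizer (hn : 0 < n)
    (hconv : ∀ k, ConvexOn ℝ Set.univ fun a => ℓ a (S k).2)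
    (hmin : ∀ v, regRisk ℓ lam S h w ≤ regRisk ℓ lam S h v) :
    ∃ u : Fin n → ℝ, (∀ k, IsSubgradAt (fun a => ℓ a (S k).2) (u k) ⟪(S k).1, w⟫_ℝ) ∧
      ∑ k, u k • (S k).1 = ((n : ℝ) * lam) • (h - w) := by
  have hn0 : (0 : ℝ) < n := by exact_mod_cast hn
  set lo : Fin n → ℝ := fun k =>
    derivWithin (fun a => ℓ a (S k).2) (Set.Iio ⟪(S k).1, w⟫_ℝ) ⟪(S k).1, w⟫_ℝ with hlo
  set hi : Fin n → ℝ := fun k =>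
    derivWithin (fun a => ℓ a (S k).2) (Set.Ioi ⟪(S k).1, w⟫_ℝ) ⟪(S k).1, w⟫_ℝ with hhi
  set A : (Fin n → ℝ) →ₗ[ℝ] Vec d := Fintype.linearCombination ℝ fun k => (S k).1 with hA
  by_cases hp : ((n : ℝ) * lam) • (h - w) ∈ A '' Set.Icc lo hi
  · obtain ⟨u, hu, hAu⟩ := hp
    refine ⟨u, fun k => (hconv k).isSubgradAt_of_mem_Icc ⟨hu.1 k, hu.2 k⟩, ?_⟩
    rw [← hAu, hA, Fintype.linearCombination_apply]
  exfalso
  obtain ⟨φ, r, hφ, hr⟩ := geometric_hahn_banach_closed_point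
    ((convex_Icc lo hi).linear_image A)
    (isCompact_Icc.image A.continuous_of_finiteDimensional).isClosed hp
  set v := (InnerProductSpace.toDual ℝ (Vec d)).symm φ with hv
  have hφv : ∀ x, φ x = ⟪v, x⟫_ℝ := fun x => by
    rw [hv, InnerProductSpace.toDual_symm_apply]
  choose u hu hder using fun k =>
    (hconv k).exists_hasDerivWithinAt_comp_line ⟪(S k).1, w⟫_ℝ ⟪(S k).1, v⟫_ℝ
  have hlt : ⟪v, A u⟫_ℝ < ⟪v, ((n : ℝ) * lam) • (h - w)⟫_ℝ := by
    rw [← hφv, ← hφv]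
    exact (hφ _ ⟨u, ⟨fun k => (hu k).1, fun k => (hu k).2⟩, rfl⟩).trans hr
  have hAu : ⟪v, A u⟫_ℝ = ∑ k, u k * ⟪(S k).1, v⟫_ℝ := by
    rw [hA, Fintype.linearCombination_apply, inner_sum]
    exact Finset.sum_congr rfl fun k _ => by rw [inner_smul_right, real_inner_comm]
  have hrisk : (fun t : ℝ => regRisk ℓ lam S h (w + t • v)) = fun t =>
      (n : ℝ)⁻¹ * ∑ k, ℓ (⟪(S k).1, w⟫_ℝ + t * ⟪(S k).1, v⟫_ℝ) (S k).2
        + lam / 2 * (‖w - h‖ ^ 2 + t * (2 * ⟪w - h, v⟫_ℝ) + t ^ 2 * ‖v‖ ^ 2) := by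
    funext t
    simp only [regRisk, empRisk, inner_add_right, inner_smul_right]
    rw [add_sub_right_comm, norm_add_sq_real, inner_smul_right, norm_smul, mul_pow,
      Real.norm_eq_abs, sq_abs]
    ring
  have hquad : HasDerivWithinAt (fun t : ℝ =>
      lam / 2 * (‖w - h‖ ^ 2 + t * (2 * ⟪w - h, v⟫_ℝ) + t ^ 2 * ‖v‖ ^ 2))
      (lam / 2 * (2 * ⟪w - h, v⟫_ℝ)) (Set.Ioi 0) 0 := by
    have h1 := (((hasDerivAt_id (0 : ℝ)).mul_const (2 * ⟪w - h, v⟫_ℝ)).const_add (‖w - h‖ ^ 2)).add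
      (((hasDerivAt_id (0 : ℝ)).pow 2).mul_const (‖v‖ ^ 2))
    simpa using (h1.const_mul (lam / 2)).hasDerivWithinAt
  have hD := ((HasDerivWithinAt.fun_sum fun k (_ : k ∈ Finset.univ) => hder k).const_mul
    (n : ℝ)⁻¹).add hquad
  have hD' : HasDerivWithinAt (fun t : ℝ => regRisk ℓ lam S h (w + t • v))
      ((n : ℝ)⁻¹ * ∑ k, u k * ⟪(S k).1, v⟫_ℝ + lam / 2 * (2 * ⟪w - h, v⟫_ℝ)) (Set.Ioi 0) 0 := by
    rw [hrisk]; exact hD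
  rw [hasDerivWithinAt_iff_tendsto_slope' (by simp)] at hD'
  have hnonneg := ge_of_tendsto hD' (b := 0) (by
    filter_upwards [self_mem_nhdsWithin] with t (ht : 0 < t)
    rw [slope_def_field]
    refine div_nonneg (sub_nonneg.2 ?_) (by linarith)
    simpa using hmin (w + t • v))
  rw [hAu, inner_smul_right, ← neg_sub w h, inner_neg_right, real_inner_comm (w - h) v] at hlt
  have : (n : ℝ) * ((n : ℝ)⁻¹ * ∑ k, u k * ⟪(S k).1, v⟫_ℝ + lam / 2 * (2 * ⟪w - h, v⟫_ℝ))
      = ∑ k, u k * ⟪(S k).1, v⟫_ℝ + n * lam * ⟪w - h, v⟫_ℝ := by field_simp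
  have := mul_nonneg hn0.le hnonneg
  linarith

theorem eq_of_isMinimizer (hn : 0 < n) (hlam : 0 < lam)
    (hconv : ∀ k, ConvexOn ℝ Set.univ fun a => ℓ a (S k).2)
    (hmin : ∀ v, regRisk ℓ lam S h w ≤ regRisk ℓ lam S h v)
    (hmin' : ∀ v, regRisk ℓ lam S h w' ≤ regRisk ℓ lam S h v) : w = w' := by
  obtain ⟨u, hu, hsum⟩ := exists_subgrad_of_isMinimizer hn hconv hmin
  obtain ⟨u', hu', hsum'⟩ := exists_subgrad_of_isMinimizer hn hconv hmin'
  have hn0 : (0 : ℝ) < n := by exact_mod_cast hn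
  have h1 : 0 ≤ ⟪∑ k, u k • (S k).1 - ∑ k, u' k • (S k).1, w - w'⟫_ℝ := by
    rw [← Finset.sum_sub_distrib, sum_inner]
    refine Finset.sum_nonneg fun k _ => ?_
    rw [← sub_smul, inner_smul_left, inner_sub_right]
    exact (hu k).mul_sub_nonneg (hu' k)
  rw [hsum, hsum', ← smul_sub, sub_sub_sub_cancel_left, ← neg_sub w w', inner_smul_left,
    inner_neg_left, real_inner_self_eq_norm_sq] at h1
  simp only [conj_trivial] at h1
  have h2 : 0 < n * lam := by positivity
  have h3 : ‖w - w'‖ ^ 2 ≤ 0 := by nlinarith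
  have h4 : ‖w - w'‖ = 0 := by nlinarith [norm_nonneg (w - w')]
  exact sub_eq_zero.1 (norm_eq_zero.1 h4)

end BiasedERM

section Symmetrization

theorem sum_lintegral_le_lintegral_sum {α ι : Type*} [MeasurableSpace α] (μ : Measure α)
    (s : Finset ι) (f : ι → α → ENNReal) :
    ∑ i ∈ s, ∫⁻ a, f i a ∂μ ≤ ∫⁻ a, ∑ i ∈ s, f i a ∂μ := by
  classical
  induction s using Finset.induction_on with
  | empty => simp
  | insert i s hi ih =>
    simp only [Finset.sum_insert hi]
    exact (add_le_add_right ih _).trans (le_lintegral_add _ _)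

theorem lintegral_pi_comp_perm {n : ℕ} {X : Type*} [MeasurableSpace X] (μ : Measure X)
    [SigmaFinite μ] (f : (Fin n → X) → ENNReal) (σ : Equiv.Perm (Fin n)) :
    ∫⁻ S, f (S ∘ σ) ∂(Measure.pi fun _ : Fin n => μ)
      = ∫⁻ S, f S ∂(Measure.pi fun _ : Fin n => μ) := by
  have h := (measurePreserving_piCongrLeft (fun _ : Fin n => μ) σ.symm).map_eq
  conv_rhs => rw [← h, lintegral_map_equiv]
  refine lintegral_congr fun S => congrArg f (funext fun i => ?_)
  have := Equiv.piCongrLeft_apply_apply (fun _ : Fin n => X) σ.symm S (σ i)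
  rw [MeasurableEquiv.coe_piCongrLeft]
  simpa using this.symm

/-- The mean of `f` over i.i.d. samples is bounded by any bound for its average over all
reorderings of the sample; no measurability is needed. -/
theorem lintegral_pi_le_of_sum_perm_le {n : ℕ} {X : Type*} [MeasurableSpace X] (μ : Measure X)
    [IsProbabilityMeasure μ] (f : (Fin n → X) → ENNReal) (C : ENNReal)
    (hf : ∀ᵐ S ∂(Measure.pi fun _ : Fin n => μ),
      ∑ σ : Equiv.Perm (Fin n), f (S ∘ σ) ≤ n.factorial * C) :
    ∫⁻ S, f S ∂(Measure.pi fun _ : Fin n => μ) ≤ C := by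
  have h1 : n.factorial * ∫⁻ S, f S ∂(Measure.pi fun _ : Fin n => μ) ≤ n.factorial * C := by
    calc _ = ∑ σ : Equiv.Perm (Fin n), ∫⁻ S, f (S ∘ σ) ∂(Measure.pi fun _ : Fin n => μ) := by
          simp [lintegral_pi_comp_perm, Fintype.card_perm]
      _ ≤ ∫⁻ S, ∑ σ : Equiv.Perm (Fin n), f (S ∘ σ) ∂(Measure.pi fun _ : Fin n => μ) :=
          sum_lintegral_le_lintegral_sum _ _ fun σ : Equiv.Perm (Fin n) => fun S => f (S ∘ σ)
      _ ≤ ∫⁻ _, n.factorial * C ∂(Measure.pi fun _ : Fin n => μ) := lintegral_mono_ae hf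
      _ = _ := by simp
  exact (ENNReal.mul_le_mul_iff_right (by simpa using n.factorial_ne_zero) (by simp)).1 h1

end Symmetrization

section MetaGradient

/-- The values `u x_i` of the stochastic subgradients at the point `h - λ⁻¹ v`. -/
def StochasticSubgrad {d n : ℕ} (ℓ : ℝ → ℝ → ℝ) (lam : ℝ) (S : Fin n → Pt d) (h : Vec d)
    (i : Fin n) (v g : Vec d) : Prop :=
  ∃ u, IsSubgradAt (fun a => ℓ a (S i).2) u ⟪(S i).1, h - lam⁻¹ • v⟫_ℝ ∧ g = u • (S i).1

variable {d n : ℕ} {ℓ : ℝ → ℝ → ℝ} {lam L R : ℝ} {S : Fin n → Pt d} {h : Vec d}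

theorem antitoneFamily_stochasticSubgrad (hlam : 0 < lam) (hR : ∀ k, ‖(S k).1‖ ≤ R)
    (hlip : ∀ k a b, |ℓ a (S k).2 - ℓ b (S k).2| ≤ L * |a - b|) :
    AntitoneFamily (StochasticSubgrad ℓ lam S h) (L * R) where
  inner_nonpos := by
    rintro i v v' _ _ ⟨u, hu, rfl⟩ ⟨u', hu', rfl⟩
    have h1 := hu.mul_sub_nonneg hu'
    rw [← inner_sub_right, sub_sub_sub_cancel_left, ← smul_sub, inner_smul_right,
      ← neg_sub v v', inner_neg_right] at h1
    rw [← sub_smul, inner_smul_left]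
    simp only [conj_trivial]
    have h2 : lam * ((u - u') * (lam⁻¹ * -⟪(S i).1, v - v'⟫_ℝ))
        = -((u - u') * ⟪(S i).1, v - v'⟫_ℝ) := by field_simp
    nlinarith
  norm_le := by
    rintro i v _ ⟨u, hu, rfl⟩
    rw [norm_smul]
    exact mul_le_mul (hu.abs_le (hlip i)) (hR i) (norm_nonneg _)
      ((abs_nonneg u).trans (hu.abs_le (hlip i)))

/-- The iterates of stochastic subgradient descent are determined by averages of stochastic
subgradients. -/
theorem sgd_iterate_eq [NeZero n] (hlam : lam ≠ 0) {W : ℕ → Vec d} {u : Fin n → ℝ}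
    (hW1 : W 1 = h) (hrec : ∀ k : Fin n, W (k.1 + 2) = W (k.1 + 1)
      - (((k.1 + 1 : ℕ) : ℝ) * lam)⁻¹ • (u k • (S k).1 + lam • (W (k.1 + 1) - h)))
    {k : ℕ} (hk : k ≤ n) :
    W (k + 1) = h - lam⁻¹ • (k : ℝ)⁻¹ •
      ∑ i ∈ Finset.range k, u (Fin.ofNat n i) • (S (Fin.ofNat n i)).1 := by
  induction k with
  | zero => simp [hW1]
  | succ k ih =>
    have h1 := hrec (Fin.ofNat n k)
    have hval : (Fin.ofNat n k).1 = k := by simpa using Nat.mod_eq_of_lt hk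
    rw [hval, ih (by omega)] at h1
    rw [h1, Finset.sum_range_succ]
    rcases Nat.eq_zero_or_pos k with rfl | hk0
    · simp
    have hk' : (k : ℝ) ≠ 0 := by positivity
    have hk1 : (k : ℝ) + 1 ≠ 0 := by positivity
    generalize ∑ i ∈ Finset.range k, u (Fin.ofNat n i) • (S (Fin.ofNat n i)).1 = G
    generalize u (Fin.ofNat n k) • (S (Fin.ofNat n k)).1 = e
    push_cast
    match_scalars <;> field_simp <;> ring

theorem sum_perm_sq_discrepancy_le (hn : 1 ≤ n) (hlam : 0 < lam)
    (hconv : ∀ k, ConvexOn ℝ Set.univ fun a => ℓ a (S k).2)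
    (hlip : ∀ k a b, |ℓ a (S k).2 - ℓ b (S k).2| ≤ L * |a - b|)
    (hR : ∀ k, ‖(S k).1‖ ≤ R)
    (W : (Fin n → Pt d) → ℕ → Vec d) (u' : (Fin n → Pt d) → Fin n → ℝ)
    (hW1 : ∀ S, W S 1 = h)
    (hsub : ∀ S (k : Fin n),
      IsSubgradAt (fun a => ℓ a (S k).2) (u' S k) (⟪(S k).1, W S (k.1 + 1)⟫_ℝ))
    (hrec : ∀ S (k : Fin n), W S (k.1 + 2)
      = W S (k.1 + 1) - (((k.1 + 1 : ℕ) : ℝ) * lam)⁻¹ •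
          (u' S k • (S k).1 + lam • (W S (k.1 + 1) - h)))
    (erm : (Fin n → Pt d) → Vec d)
    (herm : ∀ S w, regRisk ℓ lam S h (erm S) ≤ regRisk ℓ lam S h w) :
    ∑ σ : Equiv.Perm (Fin n),
        ‖((-lam) • (erm (S ∘ σ) - h)) - ((-lam) • (W (S ∘ σ) (n + 1) - h))‖ ^ 2
      ≤ n.factorial * (4 * R ^ 2 * L ^ 2 * (Real.log n + 1) / n) := by
  have : NeZero n := ⟨by omega⟩
  have hn0 : (0 : ℝ) < n := by exact_mod_cast hn
  have hT := antitoneFamily_stochasticSubgrad (h := h) hlam hR hlip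
  have herm_perm : ∀ σ : Equiv.Perm (Fin n), erm (S ∘ σ) = erm S := fun σ =>
    eq_of_isMinimizer hn hlam hconv
      (fun v => by simpa only [regRisk_comp_perm] using herm (S ∘ σ) v) (herm S)
  obtain ⟨us, hus, hsum⟩ := exists_subgrad_of_isMinimizer hn hconv (herm S)
  set c := lam • (h - erm S) with hc
  have hgs : ∀ i, StochasticSubgrad ℓ lam S h i c (us i • (S i).1) := fun i =>
    ⟨us i, by rw [hc, inv_smul_smul₀ hlam.ne', sub_sub_cancel]; exact hus i, rfl⟩
  have hcentre : ∑ i, (us i • (S i).1 - c) = 0 := by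
    rw [Finset.sum_sub_distrib, hsum, hc, mul_smul]
    simp [Nat.cast_smul_eq_nsmul]
  have hiter : ∀ (σ : Equiv.Perm (Fin n)) (k : ℕ), k ≤ n → W (S ∘ σ) (k + 1)
      = h - lam⁻¹ • (k : ℝ)⁻¹ • ∑ i ∈ Finset.range k,
        u' (S ∘ σ) (Fin.ofNat n i) • (S (visit σ i)).1 := fun σ k hk =>
    sgd_iterate_eq (S := S ∘ σ) hlam.ne' (hW1 (S ∘ σ)) (hrec (S ∘ σ)) hk
  have hpath : ∀ σ : Equiv.Perm (Fin n), IsAveragedPath (StochasticSubgrad ℓ lam S h) n (visit σ)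
      fun i => u' (S ∘ σ) (Fin.ofNat n i) • (S (visit σ i)).1 := by
    intro σ k hk
    refine ⟨u' (S ∘ σ) (Fin.ofNat n k), ?_, rfl⟩
    rw [← hiter σ k hk.le]
    have h1 := hsub (S ∘ σ) (Fin.ofNat n k)
    have hval : (Fin.ofNat n k).1 = k := by simpa using Nat.mod_eq_of_lt hk
    rw [hval] at h1
    exact h1
  have hmain := hT.sum_sq_centredSum_le_log
    (fun i v => let ⟨u, hu⟩ := (hconv i).exists_isSubgradAt _; ⟨_, u, hu, rfl⟩)
    hgs hcentre hpath
  have hdisc : ∀ σ : Equiv.Perm (Fin n),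
      ‖((-lam) • (erm (S ∘ σ) - h)) - ((-lam) • (W (S ∘ σ) (n + 1) - h))‖ ^ 2
        = ((n : ℝ) ^ 2)⁻¹ * ‖centredSum c
          (fun i => u' (S ∘ σ) (Fin.ofNat n i) • (S (visit σ i)).1) n‖ ^ 2 := by
    intro σ
    rw [herm_perm, hiter σ n le_rfl, centredSum_eq_smul, norm_smul, mul_pow, Real.norm_natCast,
      inv_mul_cancel_left₀ (by positivity), ← norm_neg]
    congr 2
    rw [hc]
    match_scalars <;> (field_simp; try ring)
  rw [Finset.sum_congr rfl fun σ _ => hdisc σ, ← Finset.mul_sum, inv_mul_le_iff₀ (by positivity)]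
  refine hmain.trans_eq ?_
  field_simp

end MetaGradient

/-- Accuracy of the approximate meta-gradient: the squared discrepancy
`‖Δ_{Z_n}(h)‖² = ‖∇L_{Z_n}(h) - ∇̂L_{Z_n}(h)‖²` between the exact meta-gradient
`-λ(w_h(Z_n) - h)` and its approximation `-λ(w^{(n+1)}_h(Z_n) - h)` satisfies, in
expectation, `E‖Δ‖² ≤ 4R²L²(log n + 1)/n`. -/
theorem stmt6
    (d n : ℕ) (hd : 1 ≤ d) (hn : 1 ≤ n)
    (R L lam : ℝ) (hR : 0 ≤ R) (hL : 0 ≤ L) (hlam : 0 < lam)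
    (Y : Set ℝ) (ℓ : ℝ → ℝ → ℝ)
    (hℓ0 : ∀ a y, y ∈ Y → 0 ≤ ℓ a y)
    (hℓconv : ∀ y ∈ Y, ConvexOn ℝ Set.univ fun a => ℓ a y)
    (hℓlip : ∀ y ∈ Y, ∀ a b, |ℓ a y - ℓ b y| ≤ L * |a - b|)
    (μ : Measure (Pt d)) [IsProbabilityMeasure μ]
    (hμY : ∀ᵐ z ∂μ, z.2 ∈ Y) (hμR : ∀ᵐ z ∂μ, ‖z.1‖ ≤ R)
    (h : Vec d)
    -- Algorithm 1: SGD on the biased regularized risk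
    (W : (Fin n → Pt d) → ℕ → Vec d)
    (u' : (Fin n → Pt d) → Fin n → ℝ)
    (hu'meas : ∀ k, Measurable fun S => u' S k)
    (hW1 : ∀ S, W S 1 = h)
    (hsub : ∀ S (k : Fin n),
      IsSubgradAt (fun a => ℓ a (S k).2) (u' S k) (⟪(S k).1, W S (k.1 + 1)⟫_ℝ))
    (hrec : ∀ S (k : Fin n), W S (k.1 + 2)
      = W S (k.1 + 1) - (((k.1 + 1 : ℕ) : ℝ) * lam)⁻¹ •
          (u' S k • (S k).1 + lam • (W S (k.1 + 1) - h)))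
    -- the biased ERM
    (erm : (Fin n → Pt d) → Vec d)
    (herm : ∀ S w, regRisk ℓ lam S h (erm S) ≤ regRisk ℓ lam S h w) :
    ∫⁻ S, ENNReal.ofReal
        (‖((-lam) • (erm S - h)) - ((-lam) • (W S (n + 1) - h))‖ ^ 2)
        ∂(Measure.pi fun _ : Fin n => μ)
      ≤ ENNReal.ofReal (4 * R ^ 2 * L ^ 2 * (Real.log n + 1) / n) := by
  refine lintegral_pi_le_of_sum_perm_le μ _ _ ?_
  have hpi : ∀ᵐ S ∂(Measure.pi fun _ : Fin n => μ), ∀ k, (S k).2 ∈ Y ∧ ‖(S k).1‖ ≤ R :=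
    ae_all_iff.2 fun k =>
      (Measure.tendsto_eval_ae_ae (μ := fun _ : Fin n => μ) (i := k)).eventually (hμY.and hμR)
  filter_upwards [hpi] with S hS
  rw [← ENNReal.ofReal_sum_of_nonneg fun _ _ => by positivity, ← ENNReal.ofReal_natCast,
    ← ENNReal.ofReal_mul (by positivity)]
  exact ENNReal.ofReal_le_ofReal (sum_perm_sq_discrepancy_le hn hlam
    (fun k => hℓconv _ (hS k).1) (fun k => hℓlip _ (hS k).1) (fun k => (hS k).2)
    W u' hW1 hsub hrec erm herm)
end
end

section
/- (Generalization error of the biased ERM.) Under bounded inputs and Lipschitz loss, for every probability measure μ on Z with ‖x‖ ≤ R μ-almost surely, every h ∈ ℝ^d and λ > 0, the biased ERM w_h satisfies E_{Z_n∼μ^n}[ R_μ(w_h(Z_n)) − R_{Z_n}(w_h(Z_n)) ] ≤ L² R²/(λ n). -/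
open MeasureTheory Real
open scoped InnerProductSpace

noncomputable section

section PairInequality

variable {E : Type*} [NormedAddCommGroup E] [InnerProductSpace ℝ E]

/-- Scalar form of the pairwise stability inequality. -/
lemma abs_add_abs_le_of_bounds {t t' s s' c m m' : ℝ}
    (ht1 : t ≤ 1) (ht0' : 0 ≤ t') (ht1' : t' ≤ 1) (ht0 : 0 ≤ t)
    (hm : 0 ≤ m) (hm' : 0 ≤ m') (hmt : m ^ 2 ≤ t * (1 - t)) (hmt' : m' ^ 2 ≤ t' * (1 - t'))
    (hc0 : 0 ≤ 1 + c) (hc1 : c ≤ 1) (hs : (1 + c) / 2 ≤ 1 + s) (hs' : (1 + c) / 2 ≤ 1 + s')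
    (hst : s ^ 2 ≤ t) (hst' : s' ^ 2 ≤ t')
    (h : t' < s → m' ^ 2 ≤ 4 * (1 - s)) (h' : t < s' → m ^ 2 ≤ 4 * (1 - s')) :
    |s - t'| + |s' - t| ≤ 2 - t' * s - t * s' - m * m' * (1 + c) / 2 := by
  have hm1 : m ^ 2 ≤ 1 - t := by nlinarith
  have hm1' : m' ^ 2 ≤ 1 - t' := by nlinarith
  have key : ∀ a b : ℝ, 0 ≤ a → 0 ≤ b → a * b * (1 + c) / 2 ≤ a ^ 2 / 4 + b ^ 2 * (1 + c) / 2 := by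
    intro a b ha hb
    nlinarith [sq_nonneg (a - (1 + c) * b), mul_nonneg (mul_nonneg hc0 (sub_nonneg.2 hc1))
      (sq_nonneg b)]
  have low : ∀ a T S : ℝ, a ^ 2 ≤ 1 - T → (1 + c) / 2 ≤ 1 + S →
      a ^ 2 * (1 + c) / 2 ≤ (1 - T) * (1 + S) := by
    intro a T S h1 h2
    nlinarith [mul_le_mul h1 h2 (by linarith) (by nlinarith [sq_nonneg a])]
  have l1 := low m' t' s hm1' hs
  have l2 := low m t s' hm1 hs'
  rcases le_or_gt s t' with hle | hlt <;> rcases le_or_gt s' t with hle' | hlt'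
  · rw [abs_of_nonpos (by linarith), abs_of_nonpos (by linarith)]
    nlinarith [mul_nonneg hc0 (sq_nonneg (m - m')), mul_nonneg hc0 (mul_nonneg hm hm')]
  · rw [abs_of_nonpos (by linarith), abs_of_pos (by linarith)]
    have := h' hlt'
    nlinarith [key m m' hm hm', mul_nonneg ht0 (by nlinarith [sq_nonneg m] : 0 ≤ 1 - s')]
  · rw [abs_of_pos (by linarith), abs_of_nonpos (by linarith)]
    have := h hlt
    nlinarith [key m' m hm' hm, mul_nonneg ht0' (by nlinarith [sq_nonneg m'] : 0 ≤ 1 - s)]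
  · rw [abs_of_pos (by linarith), abs_of_pos (by linarith)]
    have e1 : m ^ 2 / 2 ≤ 1 - s := by nlinarith [sq_nonneg (1 - s)]
    have e2 : m' ^ 2 / 2 ≤ 1 - s' := by nlinarith [sq_nonneg (1 - s')]
    have e3 := mul_nonneg ht0' ((by positivity : (0:ℝ) ≤ m ^ 2 / 2).trans e1)
    have e4 := mul_nonneg ht0 ((by positivity : (0:ℝ) ≤ m' ^ 2 / 2).trans e2)
    nlinarith [sq_nonneg (m - m'), mul_nonneg (mul_nonneg hm hm') (sub_nonneg.2 hc1)]

lemma inner_sq_le_normSq {x : E} (hx : ‖x‖ ≤ 1) (u : E) : ⟪x, u⟫_ℝ ^ 2 ≤ ‖u‖ ^ 2 := by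
  rw [sq_le_sq, abs_norm]
  exact (abs_real_inner_le_norm x u).trans (mul_le_of_le_one_left (norm_nonneg u) hx)

lemma inner_nonneg_le_one {x w : E} {v : ℝ} (hx : ‖x‖ ≤ 1) (hv0 : 0 ≤ v) (hv1 : v ≤ 1)
    (hw : ‖w‖ ^ 2 ≤ v * ⟪x, w⟫_ℝ) :
    0 ≤ ⟪x, w⟫_ℝ ∧ ⟪x, w⟫_ℝ ≤ v ∧ ‖w‖ ^ 2 ≤ ⟪x, w⟫_ℝ := by
  have h1 := inner_sq_le_normSq hx w
  have h0 : 0 ≤ ⟪x, w⟫_ℝ := by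
    by_contra hneg
    push Not at hneg
    have : 0 < ⟪x, w⟫_ℝ ^ 2 := sq_pos_of_neg hneg
    nlinarith
  refine ⟨h0, ?_, hw.trans (mul_le_of_le_one_left h0 hv1)⟩
  by_contra hgt
  push Not at hgt
  nlinarith

lemma half_one_add_inner_le {x x' w : E} (hx : ‖x‖ ≤ 1) (hx' : ‖x'‖ ≤ 1)
    (hw : ‖w‖ ^ 2 ≤ ⟪x, w⟫_ℝ) : (1 + ⟪x, x'⟫_ℝ) / 2 ≤ 1 + ⟪x', w⟫_ℝ := by
  have h2 : ‖(2 : ℝ) • w - x‖ ≤ 1 := by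
    have : ‖(2 : ℝ) • w - x‖ ^ 2 ≤ 1 := by
      rw [norm_sub_sq_real, norm_smul, inner_smul_left, real_inner_comm]
      norm_num
      nlinarith [norm_nonneg x]
    nlinarith [norm_nonneg ((2 : ℝ) • w - x)]
  have h3 := (abs_le.1 (abs_real_inner_le_norm x' ((2 : ℝ) • w - x))).1
  rw [inner_sub_right, inner_smul_right, real_inner_comm x x'] at h3
  nlinarith [mul_le_one₀ hx' (norm_nonneg _) h2]

lemma normSq_sub_inner_sq_le {x x' w w' : E} {v v' : ℝ}
    (hx : ‖x‖ ≤ 1) (hx' : ‖x'‖ ≤ 1) (hv0 : 0 ≤ v) (hv1 : v ≤ 1) (hv0' : 0 ≤ v') (hv1' : v' ≤ 1)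
    (hw : ‖w‖ ^ 2 ≤ v * ⟪x, w⟫_ℝ) (hw' : ‖w'‖ ^ 2 ≤ v' * ⟪x', w'⟫_ℝ)
    (hww : ‖w - w'‖ ^ 2 ≤ v * ⟪x, w - w'⟫_ℝ - v' * ⟪x', w - w'⟫_ℝ)
    (hlt : ⟪x', w'⟫_ℝ < ⟪x', w⟫_ℝ) :
    ‖w'‖ ^ 2 - ⟪x', w'⟫_ℝ ^ 2 ≤ 4 * (1 - ⟪x', w⟫_ℝ) := by
  obtain ⟨ht0, htv, hwt⟩ := inner_nonneg_le_one hx hv0 hv1 hw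
  obtain ⟨ht0', htv', hwt'⟩ := inner_nonneg_le_one hx' hv0' hv1' hw'
  have hs2 := inner_sq_le_normSq hx' w
  have hg := inner_sq_le_normSq hx' (v • x - w - (w - w'))
  have hc : ⟪x', x⟫_ℝ ≤ 1 :=
    (real_inner_le_norm x' x).trans (mul_le_one₀ hx' (norm_nonneg _) hx)
  have hxx : ‖x‖ ^ 2 ≤ 1 := by nlinarith [norm_nonneg x]
  have hexp : ‖v • x - w - (w - w')‖ ^ 2
      = v ^ 2 * ‖x‖ ^ 2 + 4 * ‖w‖ ^ 2 + ‖w'‖ ^ 2 - 4 * v * ⟪x, w⟫_ℝ + 2 * v * ⟪x, w'⟫_ℝ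
        - 4 * ⟪w, w'⟫_ℝ := by
    simp only [← real_inner_self_eq_norm_sq, inner_sub_left, inner_sub_right, inner_smul_left,
      inner_smul_right, real_inner_comm x w, real_inner_comm x w', real_inner_comm w w']
    simp
    ring
  have hexp2 : ‖w - w'‖ ^ 2 = ‖w‖ ^ 2 - 2 * ⟪w, w'⟫_ℝ + ‖w'‖ ^ 2 := norm_sub_sq_real w w'
  rw [hexp] at hg
  rw [hexp2] at hww
  simp only [inner_sub_right, inner_smul_right] at hg hww
  set t := ⟪x, w⟫_ℝ
  set t' := ⟪x', w'⟫_ℝ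
  set s := ⟪x', w⟫_ℝ
  set c := ⟪x', x⟫_ℝ
  have hk : v * c - s ≤ 1 - s := by nlinarith
  have hs1 : s ≤ 1 := by nlinarith
  have hq : v ^ 2 * ‖x‖ ^ 2 - v * t ≤ 1 - t := by
    nlinarith [mul_nonneg (sub_nonneg.2 hv1) (by linarith : 0 ≤ v + 1 - t),
      mul_nonneg (sq_nonneg v) (sub_nonneg.2 hxx)]
  have hmain : ‖w'‖ ^ 2 - t' ^ 2 ≤ 1 - s ^ 2 + 2 * (v * c - s) * (s - t') - (v * c - s) ^ 2 := by
    nlinarith [mul_nonneg (sub_nonneg.2 htv') (sub_nonneg.2 hlt.le)]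
  have hk2 : (v * c - s) * (s - t') ≤ (1 - s) * (s - t') :=
    mul_le_mul_of_nonneg_right hk (by linarith)
  nlinarith [sq_nonneg (v * c - s), mul_nonneg (sub_nonneg.2 hs1) (by linarith : 0 ≤ 3 - 3 * s + 2 * t')]

lemma abs_inner_add_abs_inner_le {x x' w w' : E} {v v' : ℝ}
    (hx : ‖x‖ ≤ 1) (hx' : ‖x'‖ ≤ 1) (hv0 : 0 ≤ v) (hv1 : v ≤ 1) (hv0' : 0 ≤ v') (hv1' : v' ≤ 1)
    (hw : ‖w‖ ^ 2 ≤ v * ⟪x, w⟫_ℝ) (hw' : ‖w'‖ ^ 2 ≤ v' * ⟪x', w'⟫_ℝ)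
    (hww : ‖w - w'‖ ^ 2 ≤ v * ⟪x, w - w'⟫_ℝ - v' * ⟪x', w - w'⟫_ℝ) :
    |⟪x', w - w'⟫_ℝ| + |⟪x, w' - w⟫_ℝ| ≤
      2 - ⟪x', w'⟫_ℝ * ⟪x', w⟫_ℝ - ⟪x, w⟫_ℝ * ⟪x, w'⟫_ℝ
        - √(‖w‖ ^ 2 - ⟪x, w⟫_ℝ ^ 2) * √(‖w'‖ ^ 2 - ⟪x', w'⟫_ℝ ^ 2) * (1 + ⟪x, x'⟫_ℝ) / 2 := by
  obtain ⟨ht0, htv, hwt⟩ := inner_nonneg_le_one hx hv0 hv1 hw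
  obtain ⟨ht0', htv', hwt'⟩ := inner_nonneg_le_one hx' hv0' hv1' hw'
  have q := Real.sq_sqrt (sub_nonneg.2 (inner_sq_le_normSq hx w))
  have q' := Real.sq_sqrt (sub_nonneg.2 (inner_sq_le_normSq hx' w'))
  have hc := abs_le.1 ((abs_real_inner_le_norm x x').trans (mul_le_one₀ hx (norm_nonneg _) hx'))
  have hww' : ‖w' - w‖ ^ 2 ≤ v' * ⟪x', w' - w⟫_ℝ - v * ⟪x, w' - w⟫_ℝ := by
    rw [norm_sub_rev, inner_sub_right, inner_sub_right]
    rw [inner_sub_right, inner_sub_right] at hww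
    linarith
  rw [inner_sub_right, inner_sub_right]
  refine abs_add_abs_le_of_bounds (htv.trans hv1) ht0' (htv'.trans hv1') ht0 (Real.sqrt_nonneg _)
    (Real.sqrt_nonneg _) ?_ ?_ (by linarith) hc.2 (half_one_add_inner_le hx hx' hwt) ?_
    ((inner_sq_le_normSq hx' w).trans hwt) ((inner_sq_le_normSq hx w').trans hwt') ?_ ?_
  · rw [q]; linarith
  · rw [q']; linarith
  · rw [real_inner_comm]; exact half_one_add_inner_le hx' hx hwt'
  · rw [q']; exact normSq_sub_inner_sq_le hx hx' hv0 hv1 hv0' hv1' hw hw' hww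
  · rw [q]; exact normSq_sub_inner_sq_le hx' hx hv0' hv1' hv0 hv1 hw' hw hww'

/-- The vector `x` or `-x`, whichever has nonnegative inner product with `w`. -/
def alignTo (x w : E) : E := if ⟪x, w⟫_ℝ < 0 then -x else x

/-- A pairwise bound whose right-hand side is `2` minus a kernel of nonnegative mean. -/
lemma abs_inner_add_abs_inner_le_alignTo {x x' w w' : E} {v v' : ℝ}
    (hx : ‖x‖ ≤ 1) (hx' : ‖x'‖ ≤ 1) (hv : |v| ≤ 1) (hv' : |v'| ≤ 1)
    (hw : ‖w‖ ^ 2 ≤ v * ⟪x, w⟫_ℝ) (hw' : ‖w'‖ ^ 2 ≤ v' * ⟪x', w'⟫_ℝ)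
    (hww : ‖w - w'‖ ^ 2 ≤ v * ⟪x, w - w'⟫_ℝ - v' * ⟪x', w - w'⟫_ℝ) :
    |⟪x', w - w'⟫_ℝ| + |⟪x, w' - w⟫_ℝ| ≤
      2 - ⟪x', w'⟫_ℝ * ⟪x', w⟫_ℝ - ⟪x, w⟫_ℝ * ⟪x, w'⟫_ℝ
        - √(‖w‖ ^ 2 - ⟪x, w⟫_ℝ ^ 2) * √(‖w'‖ ^ 2 - ⟪x', w'⟫_ℝ ^ 2)
          * (1 + ⟪alignTo x w, alignTo x' w'⟫_ℝ) / 2 := by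
  have reduce : ∀ (x w : E) (v : ℝ), |v| ≤ 1 → ‖w‖ ^ 2 ≤ v * ⟪x, w⟫_ℝ →
      ∃ (y : E) (u : ℝ), (y = x ∨ y = -x) ∧ u • y = v • x ∧ 0 ≤ u ∧ u ≤ 1 ∧
        (w = 0 ∨ y = alignTo x w) := by
    intro x w v hv hw
    rcases le_or_gt 0 v with h0 | h0
    · refine ⟨x, v, Or.inl rfl, rfl, h0, (abs_le.1 hv).2, ?_⟩
      by_cases hneg : ⟪x, w⟫_ℝ < 0
      · left
        have : ‖w‖ ^ 2 ≤ 0 := hw.trans (mul_nonpos_of_nonneg_of_nonpos h0 hneg.le)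
        exact norm_eq_zero.1 (pow_eq_zero_iff two_ne_zero |>.1 (le_antisymm this (sq_nonneg _)))
      · right; simp [alignTo, hneg]
    · refine ⟨-x, -v, Or.inr rfl, by simp, by linarith, by linarith [(abs_le.1 hv).1], ?_⟩
      by_cases hneg : ⟪x, w⟫_ℝ < 0
      · right; simp [alignTo, hneg]
      · left
        have : ‖w‖ ^ 2 ≤ 0 := hw.trans (mul_nonpos_of_nonpos_of_nonneg h0.le (not_lt.1 hneg))
        exact norm_eq_zero.1 (pow_eq_zero_iff two_ne_zero |>.1 (le_antisymm this (sq_nonneg _)))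
  obtain ⟨y, u, hy, huy, hu0, hu1, hal⟩ := reduce x w v hv hw
  obtain ⟨y', u', hy', huy', hu0', hu1', hal'⟩ := reduce x' w' v' hv' hw'
  have e : ∀ z, u * ⟪y, z⟫_ℝ = v * ⟪x, z⟫_ℝ := fun z => by
    rw [← real_inner_smul_left, huy, real_inner_smul_left]
  have e' : ∀ z, u' * ⟪y', z⟫_ℝ = v' * ⟪x', z⟫_ℝ := fun z => by
    rw [← real_inner_smul_left, huy', real_inner_smul_left]
  have hny : ‖y‖ ≤ 1 := by rcases hy with rfl | rfl <;> simpa using hx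
  have hny' : ‖y'‖ ≤ 1 := by rcases hy' with rfl | rfl <;> simpa using hx'
  have main := abs_inner_add_abs_inner_le hny hny' hu0 hu1 hu0' hu1'
    ((e w).symm ▸ hw) ((e' w').symm ▸ hw') (by rw [e, e']; exact hww)
  have p1 : ∀ a b, ⟪y, a⟫_ℝ * ⟪y, b⟫_ℝ = ⟪x, a⟫_ℝ * ⟪x, b⟫_ℝ := fun a b => by
    rcases hy with rfl | rfl <;> simp
  have p2 : ∀ a b, ⟪y', a⟫_ℝ * ⟪y', b⟫_ℝ = ⟪x', a⟫_ℝ * ⟪x', b⟫_ℝ := fun a b => by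
    rcases hy' with rfl | rfl <;> simp
  have p3 : |⟪y, w' - w⟫_ℝ| = |⟪x, w' - w⟫_ℝ| := by
    rcases hy with rfl | rfl <;> simp only [inner_neg_left, abs_neg]
  have p4 : |⟪y', w - w'⟫_ℝ| = |⟪x', w - w'⟫_ℝ| := by
    rcases hy' with rfl | rfl <;> simp only [inner_neg_left, abs_neg]
  rw [p3, p4, p1, p2, sq ⟪y, w⟫_ℝ, sq ⟪y', w'⟫_ℝ, p1, p2, ← sq, ← sq] at main
  rcases hal with rfl | rfl
  · simpa using main
  rcases hal' with rfl | rfl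
  · simpa using main
  exact main

end PairInequality

section MeanStability

variable {E : Type*} [NormedAddCommGroup E] [InnerProductSpace ℝ E]

lemma norm_alignTo (x w : E) : ‖alignTo x w‖ = ‖x‖ := by
  unfold alignTo; split_ifs <;> simp

lemma norm_sub_inner_smul_le {x w : E} (hx : ‖x‖ ≤ 1) :
    ‖w - ⟪x, w⟫_ℝ • x‖ ≤ √(‖w‖ ^ 2 - ⟪x, w⟫_ℝ ^ 2) := by
  refine Real.le_sqrt_of_sq_le ?_
  rw [norm_sub_sq_real, real_inner_smul_right, norm_smul, real_inner_comm x w, mul_pow,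
    Real.norm_eq_abs, sq_abs]
  nlinarith [mul_nonneg (sq_nonneg ⟪x, w⟫_ℝ) (by nlinarith [norm_nonneg x] : 0 ≤ 1 - ‖x‖ ^ 2)]

variable {Z : Type*} [MeasurableSpace Z] {μ : Measure Z}

lemma integrable_inner_prod {f g : Z → E}
    (hf : Integrable f μ) (hg : Integrable g μ) :
    Integrable (fun p : Z × Z => ⟪f p.1, g p.2⟫_ℝ) (μ.prod μ) :=
  hf.op_fst_snd (op := fun a b => ⟪a, b⟫_ℝ) continuous_inner
    ⟨1, fun a b => by simpa using norm_inner_le_norm (𝕜 := ℝ) a b⟩ hg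

lemma integral_inner_prod [CompleteSpace E] [SFinite μ] {f g : Z → E} (hf : Integrable f μ) (hg : Integrable g μ) :
    ∫ p : Z × Z, ⟪f p.1, g p.2⟫_ℝ ∂μ.prod μ = ⟪∫ z, f z ∂μ, ∫ z, g z ∂μ⟫_ℝ :=
  integral_prod_bilin (innerSL ℝ) hf hg

/-- Bilinear means: the pointwise bound `‖w - a‖ ≤ m` controls `⟪∫ a, ∫ w⟫` from below. -/
lemma neg_sq_integral_le_inner_integral {a w : Z → E} {m : Z → ℝ} (ha : Integrable a μ)
    (hw : Integrable w μ) (hm : Integrable m μ) (h : ∀ᵐ z ∂μ, ‖w z - a z‖ ≤ m z) :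
    -(∫ z, m z ∂μ) ^ 2 ≤ 4 * ⟪∫ z, a z ∂μ, ∫ z, w z ∂μ⟫_ℝ := by
  have h1 : ‖(∫ z, w z ∂μ) - ∫ z, a z ∂μ‖ ≤ ∫ z, m z ∂μ := by
    rw [← integral_sub hw ha]
    exact norm_integral_le_of_norm_le hm h
  have h2 : ‖(∫ z, w z ∂μ) - ∫ z, a z ∂μ‖ ^ 2 ≤ (∫ z, m z ∂μ) ^ 2 :=
    pow_le_pow_left₀ (norm_nonneg _) h1 2
  rw [norm_sub_sq_real, real_inner_comm] at h2
  have h3 := sq_nonneg ‖(∫ z, w z ∂μ) + ∫ z, a z ∂μ‖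
  rw [norm_add_sq_real, real_inner_comm] at h3
  linarith

variable [CompleteSpace E] [MeasurableSpace E] [BorelSpace E] [SecondCountableTopology E]
  [IsProbabilityMeasure μ]

/-- Normalized mean stability bound: if the responses `W z` are strongly monotone images of
multiples `v z • X z` of the inputs, then on average `|⟪X z', W z - W z'⟫|` is at most `1`. -/
lemma integral_abs_inner_sub_le_one {X W : Z → E} {v : Z → ℝ} {K : Set Z}
    (hX : Measurable X) (hW : Measurable W) (hK : ∀ᵐ z ∂μ, z ∈ K)
    (hXK : ∀ z ∈ K, ‖X z‖ ≤ 1) (hvK : ∀ z ∈ K, |v z| ≤ 1)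
    (hWK : ∀ z ∈ K, ‖W z‖ ^ 2 ≤ v z * ⟪X z, W z⟫_ℝ)
    (hWW : ∀ z ∈ K, ∀ z' ∈ K,
      ‖W z - W z'‖ ^ 2 ≤ v z * ⟪X z, W z - W z'⟫_ℝ - v z' * ⟪X z', W z - W z'⟫_ℝ) :
    Integrable (fun p : Z × Z => |⟪X p.2, W p.1 - W p.2⟫_ℝ|) (μ.prod μ) ∧
      ∫ p : Z × Z, |⟪X p.2, W p.1 - W p.2⟫_ℝ| ∂μ.prod μ ≤ 1 := by
  have hW1 : ∀ z ∈ K, ‖W z‖ ≤ 1 := fun z hz => by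
    have h1 := hWK z hz
    have h2 : v z * ⟪X z, W z⟫_ℝ ≤ ‖W z‖ := by
      refine (le_abs_self _).trans ?_
      rw [abs_mul]
      refine (mul_le_of_le_one_left (abs_nonneg _) (hvK z hz)).trans ?_
      exact (abs_real_inner_le_norm _ _).trans
        (mul_le_of_le_one_left (norm_nonneg _) (hXK z hz))
    by_contra hgt
    push Not at hgt
    nlinarith
  have ht1 : ∀ z ∈ K, |⟪X z, W z⟫_ℝ| ≤ 1 := fun z hz =>
    (abs_real_inner_le_norm _ _).trans (mul_le_one₀ (hXK z hz) (norm_nonneg _) (hW1 z hz))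
  set t : Z → ℝ := fun z => ⟪X z, W z⟫_ℝ with ht
  set m : Z → ℝ := fun z => √(‖W z‖ ^ 2 - t z ^ 2) with hm
  set a : Z → E := fun z => alignTo (X z) (W z) with ha
  have htm : Measurable t := hX.inner hW
  have hmm : Measurable m := ((hW.norm.pow_const 2).sub (htm.pow_const 2)).sqrt
  have ham : Measurable a :=
    Measurable.ite (measurableSet_lt htm measurable_const) hX.neg hX
  have hm0 : ∀ z, 0 ≤ m z := fun z => Real.sqrt_nonneg _
  have hm1 : ∀ z ∈ K, m z ≤ 1 := fun z hz => by
    refine Real.sqrt_le_one.2 ?_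
    nlinarith [sq_nonneg (t z), norm_nonneg (W z), hW1 z hz]
  have iW : Integrable W μ := Integrable.of_bound hW.aestronglyMeasurable 1 (hK.mono hW1)
  have itX : Integrable (fun z => t z • X z) μ :=
    Integrable.of_bound (htm.smul hX).aestronglyMeasurable 1 (hK.mono fun z hz => by
      rw [norm_smul]; exact mul_le_one₀ (ht1 z hz) (norm_nonneg _) (hXK z hz))
  have im : Integrable m μ := Integrable.of_bound hmm.aestronglyMeasurable 1
    (hK.mono fun z hz => by rw [Real.norm_of_nonneg (hm0 z)]; exact hm1 z hz)
  have ima : Integrable (fun z => m z • a z) μ :=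
    Integrable.of_bound (hmm.smul ham).aestronglyMeasurable 1 (hK.mono fun z hz => by
      rw [norm_smul, Real.norm_of_nonneg (hm0 z), norm_alignTo]
      exact mul_le_one₀ (hm1 z hz) (norm_nonneg _) (hXK z hz))
  have hKK : ∀ᵐ p : Z × Z ∂μ.prod μ, p.1 ∈ K ∧ p.2 ∈ K :=
    (Measure.quasiMeasurePreserving_fst.ae hK).and (Measure.quasiMeasurePreserving_snd.ae hK)
  have iF : Integrable (fun p : Z × Z => |⟪X p.2, W p.1 - W p.2⟫_ℝ|) (μ.prod μ) := by
    refine Integrable.of_bound (Measurable.aestronglyMeasurable ?_) 2 (hKK.mono fun p hp => ?_)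
    · exact ((hX.comp measurable_snd).inner
        ((hW.comp measurable_fst).sub (hW.comp measurable_snd))).abs
    · rw [Real.norm_eq_abs, abs_abs]
      refine (abs_real_inner_le_norm _ _).trans ?_
      have := norm_sub_le (W p.1) (W p.2)
      nlinarith [hW1 _ hp.1, hW1 _ hp.2, hXK _ hp.2, norm_nonneg (W p.1 - W p.2)]
  refine ⟨iF, ?_⟩
  have hpt : ∀ᵐ p : Z × Z ∂μ.prod μ,
      |⟪X p.2, W p.1 - W p.2⟫_ℝ| + |⟪X p.1, W p.2 - W p.1⟫_ℝ| ≤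
        2 - ⟪W p.1, t p.2 • X p.2⟫_ℝ - ⟪t p.1 • X p.1, W p.2⟫_ℝ
          - (m p.1 * m p.2 + ⟪m p.1 • a p.1, m p.2 • a p.2⟫_ℝ) / 2 := by
    filter_upwards [hKK] with p hp
    have := abs_inner_add_abs_inner_le_alignTo (hXK _ hp.1) (hXK _ hp.2) (hvK _ hp.1) (hvK _ hp.2)
      (hWK _ hp.1) (hWK _ hp.2) (hWW _ hp.1 _ hp.2)
    refine this.trans (le_of_eq ?_)
    simp only [real_inner_smul_left, real_inner_smul_right, hm, ht, ha,
      real_inner_comm (X p.2) (W p.1)]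
    ring
  have iswap : Integrable (fun p : Z × Z => |⟪X p.1, W p.2 - W p.1⟫_ℝ|) (μ.prod μ) := iF.swap
  have eswap : ∫ p : Z × Z, |⟪X p.1, W p.2 - W p.1⟫_ℝ| ∂μ.prod μ
      = ∫ p : Z × Z, |⟪X p.2, W p.1 - W p.2⟫_ℝ| ∂μ.prod μ :=
    integral_prod_swap (μ := μ) (ν := μ) (fun p : Z × Z => |⟪X p.2, W p.1 - W p.2⟫_ℝ|)
  have i1 := integrable_inner_prod iW itX
  have i2 := integrable_inner_prod itX iW
  have i3 := im.mul_prod im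
  have i4 := integrable_inner_prod ima ima
  have i12 : Integrable (fun p : Z × Z => 2 - ⟪W p.1, t p.2 • X p.2⟫_ℝ) (μ.prod μ) :=
    (integrable_const (2 : ℝ)).sub i1
  have i123 : Integrable (fun p : Z × Z => 2 - ⟪W p.1, t p.2 • X p.2⟫_ℝ
      - ⟪t p.1 • X p.1, W p.2⟫_ℝ) (μ.prod μ) := i12.sub i2
  have i34 : Integrable (fun p : Z × Z => (m p.1 * m p.2 + ⟪m p.1 • a p.1, m p.2 • a p.2⟫_ℝ) / 2)
      (μ.prod μ) := (i3.add i4).div_const 2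
  have hle := integral_mono_ae (iF.add iswap) (i123.sub i34) hpt
  have eR : ∫ p : Z × Z, (2 - ⟪W p.1, t p.2 • X p.2⟫_ℝ - ⟪t p.1 • X p.1, W p.2⟫_ℝ
          - (m p.1 * m p.2 + ⟪m p.1 • a p.1, m p.2 • a p.2⟫_ℝ) / 2) ∂μ.prod μ
      = 2 - 2 * ⟪∫ z, t z • X z ∂μ, ∫ z, W z ∂μ⟫_ℝ
        - ((∫ z, m z ∂μ) ^ 2 + ‖∫ z, m z • a z ∂μ‖ ^ 2) / 2 := by
    rw [integral_sub i123 i34, integral_sub i12 i2, integral_sub (integrable_const (2 : ℝ)) i1,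
      integral_div, integral_add i3 i4,
      integral_inner_prod iW itX, integral_inner_prod itX iW, integral_inner_prod ima ima,
      integral_prod_mul, real_inner_self_eq_norm_sq, real_inner_comm]
    simp
    ring
  have hbil := neg_sq_integral_le_inner_integral itX iW im
    (hK.mono fun z hz => norm_sub_inner_smul_le (hXK z hz))
  have eL := integral_add iF iswap
  rw [eswap] at eL
  simp only [Pi.add_apply, Pi.sub_apply] at hle eL
  rw [eL, eR] at hle
  nlinarith [sq_nonneg ‖∫ z, m z • a z ∂μ‖]

end MeanStability

section StrongConvexity

variable {E : Type*} [NormedAddCommGroup E] [InnerProductSpace ℝ E]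

lemma StrongConvexOn.add_sq_norm_le_of_forall_le {f : E → ℝ} {c : ℝ}
    (hf : StrongConvexOn Set.univ c f) {w : E} (hw : ∀ u, f w ≤ f u) (u : E) :
    f w + c / 2 * ‖u - w‖ ^ 2 ≤ f u := by
  suffices c / 2 * ‖u - w‖ ^ 2 ≤ f u - f w by linarith
  by_contra! hlt
  set N := c / 2 * ‖u - w‖ ^ 2
  have hD := sub_nonneg.2 (hw u)
  have hN0 : 0 < N := hD.trans_lt hlt
  set a := (f u - f w + N) / (2 * N) with ha
  have haN : a * N = (f u - f w + N) / 2 := by rw [ha]; field_simp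
  have h0 : 0 < a := by positivity
  have ha1 : a < 1 := by rw [ha, div_lt_one (by positivity)]; linarith
  have h1 := hf.2 (Set.mem_univ u) (Set.mem_univ w) (by linarith : 0 ≤ 1 - a) h0.le (by ring)
  have h2 := hw ((1 - a) • u + a • w)
  change _ ≤ (1 - a) * f u + a * f w - (1 - a) * a * N at h1
  have h3 : (1 - a) * (a * N) ≤ (1 - a) * (f u - f w) := by linarith
  linarith [le_of_mul_le_mul_left h3 (by linarith)]

/-- A convex function bounded below by `-|τ|` along an affine functional `τ` dominates a multiple
`v * τ` with `|v| ≤ 1`. -/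
lemma ConvexOn.exists_mul_inner_le {A : E → ℝ} (hA : ConvexOn ℝ Set.univ A) {x w : E}
    (h : ∀ u, -|⟪x, u - w⟫_ℝ| ≤ A u) : ∃ v : ℝ, |v| ≤ 1 ∧ ∀ u, v * ⟪x, u - w⟫_ℝ ≤ A u := by
  set τ : E → ℝ := fun u => ⟪x, u - w⟫_ℝ with hτ
  set s : Set ℝ := insert (-1) {r | ∃ u, τ u < 0 ∧ r = A u / τ u} with hs
  have hs1 : ∀ r ∈ s, r ≤ 1 := by
    rintro r (rfl | ⟨u, hu, rfl⟩)
    · norm_num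
    · rw [div_le_one_of_neg hu]
      have := h u
      rwa [abs_of_neg hu, neg_neg] at this
  have hcross : ∀ u, 0 < τ u → ∀ r ∈ s, r ≤ A u / τ u := by
    rintro u hu r (rfl | ⟨u', hu', rfl⟩)
    · rw [le_div_iff₀ hu]
      have := h u
      rw [abs_of_pos hu] at this
      linarith
    · have hpos : 0 < τ u - τ u' := by linarith
      have hconv := hA.2 (Set.mem_univ u) (Set.mem_univ u')
        (div_nonneg (neg_nonneg.2 hu'.le) hpos.le) (div_nonneg hu.le hpos.le)
        (by field_simp; ring)
      have hz : τ ((-τ u' / (τ u - τ u')) • u + (τ u / (τ u - τ u')) • u') = 0 := by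
        have lin : ∀ a b : ℝ, τ (a • u + b • u')
            = a * (τ u + ⟪x, w⟫_ℝ) + b * (τ u' + ⟪x, w⟫_ℝ) - ⟪x, w⟫_ℝ := fun a b => by
          simp only [hτ, inner_sub_right, inner_add_right, inner_smul_right]
          ring
        rw [lin]
        field_simp
        ring
      have h0 := h ((-τ u' / (τ u - τ u')) • u + (τ u / (τ u - τ u')) • u')
      rw [show ⟪x, (-τ u' / (τ u - τ u')) • u + (τ u / (τ u - τ u')) • u' - w⟫_ℝ = 0 from hz,
        abs_zero, neg_zero] at h0
      have h1 := h0.trans hconv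
      simp only [smul_eq_mul] at h1
      have h2 : 0 ≤ -τ u' * A u + τ u * A u' := by
        have := mul_nonneg hpos.le h1
        field_simp at this
        linarith
      rw [div_le_iff_of_neg hu', div_mul_eq_mul_div, div_le_iff₀ hu]
      linarith
  have hne : s.Nonempty := ⟨-1, Set.mem_insert _ _⟩
  have hbdd : BddAbove s := ⟨1, hs1⟩
  refine ⟨sSup s, abs_le.2 ⟨le_csSup hbdd (Set.mem_insert _ _), csSup_le hne hs1⟩, fun u => ?_⟩
  change sSup s * τ u ≤ A u
  rcases lt_trichotomy (τ u) 0 with hu | hu | hu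
  · exact (div_le_iff_of_neg hu).1 (le_csSup hbdd (Set.mem_insert_of_mem _ ⟨u, hu, rfl⟩))
  · have := h u
    rw [show ⟪x, u - w⟫_ℝ = 0 from hu] at this
    simpa [hu] using this
  · exact (le_div_iff₀ hu).1 (csSup_le hne (hcross u hu))

/-- Optimality condition for the minimizer of `φ + G`, where `φ` only varies along `ξ`. -/
lemma StrongConvexOn.exists_mul_inner_add_le {G φ : E → ℝ} {c : ℝ}
    (hG : StrongConvexOn Set.univ c G) (hφ : ConvexOn ℝ Set.univ φ) {ξ w : E}
    (hlip : ∀ u, φ u - φ w ≤ |⟪ξ, u - w⟫_ℝ|) (hw : ∀ u, φ w + G w ≤ φ u + G u) :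
    ∃ v : ℝ, |v| ≤ 1 ∧ ∀ u, G w + v * ⟪ξ, u - w⟫_ℝ + c / 2 * ‖u - w‖ ^ 2 ≤ G u := by
  have hsum : StrongConvexOn Set.univ c (φ + G) := by
    rw [strongConvexOn_iff_convex] at hG ⊢
    exact (hφ.add hG).congr fun u _ => by simp only [Pi.add_apply]; ring
  have hA : ConvexOn ℝ Set.univ fun u => G u - G w - c / 2 * ‖u - w‖ ^ 2 := by
    have hlin : ConvexOn ℝ Set.univ fun u => ⟪c • w, u⟫_ℝ :=
      ((innerSL ℝ (c • w)).toLinearMap).convexOn convex_univ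
    have := ((strongConvexOn_iff_convex.1 hG).add hlin).add_const (-G w - c / 2 * ‖w‖ ^ 2)
    refine this.congr fun u _ => ?_
    simp only [Pi.add_apply]
    rw [norm_sub_sq_real, real_inner_smul_left, real_inner_comm w u]
    ring
  obtain ⟨v, hv, hvu⟩ := hA.exists_mul_inner_le (x := ξ) (w := w) fun u => by
    have h1 := hsum.add_sq_norm_le_of_forall_le hw u
    have h2 := hlip u
    simp only [Pi.add_apply] at h1
    linarith
  exact ⟨v, hv, fun u => by linarith [hvu u]⟩

variable {Z : Type*} [MeasurableSpace Z] {μ : Measure Z} [CompleteSpace E] [MeasurableSpace E]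
  [BorelSpace E] [SecondCountableTopology E] [IsProbabilityMeasure μ]

/-- Mean stability of the minimizers of `φ z + G` when one example `z` is resampled. -/
lemma StrongConvexOn.integral_abs_inner_sub_le {G : E → ℝ} {φ : Z → E → ℝ} {ξ W : Z → E}
    {K : Set Z} {c ρ : ℝ} (hG : StrongConvexOn Set.univ c G) (hc : 0 < c)
    (hGmin : ∃ w, ∀ u, G w ≤ G u) (hρ : 0 ≤ ρ)
    (hξ : Measurable ξ) (hW : Measurable W) (hK : ∀ᵐ z ∂μ, z ∈ K)
    (hξK : ∀ z ∈ K, ‖ξ z‖ ≤ ρ) (hφ : ∀ z ∈ K, ConvexOn ℝ Set.univ (φ z))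
    (hlip : ∀ z ∈ K, ∀ u w, φ z u - φ z w ≤ |⟪ξ z, u - w⟫_ℝ|)
    (hmin : ∀ z ∈ K, ∀ u, φ z (W z) + G (W z) ≤ φ z u + G u) :
    Integrable (fun p : Z × Z => |⟪ξ p.2, W p.1 - W p.2⟫_ℝ|) (μ.prod μ) ∧
      ∫ p : Z × Z, |⟪ξ p.2, W p.1 - W p.2⟫_ℝ| ∂μ.prod μ ≤ ρ ^ 2 / c := by
  rcases hρ.eq_or_lt with rfl | hρ
  · have hz : (fun p : Z × Z => |⟪ξ p.2, W p.1 - W p.2⟫_ℝ|) =ᵐ[μ.prod μ] 0 := by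
      filter_upwards [Measure.quasiMeasurePreserving_snd.ae hK] with p hp
      simp [norm_le_zero_iff.1 (hξK _ hp)]
    refine ⟨(integrable_zero _ _ _).congr hz.symm, ?_⟩
    rw [integral_congr_ae hz]
    simp
  obtain ⟨w₀, hw₀⟩ := hGmin
  have hex : ∀ z, ∃ v : ℝ, z ∈ K → |v| ≤ 1 ∧
      ∀ u, G (W z) + v * ⟪ξ z, u - W z⟫_ℝ + c / 2 * ‖u - W z‖ ^ 2 ≤ G u := fun z => by
    by_cases hz : z ∈ K
    · obtain ⟨v, hv⟩ := hG.exists_mul_inner_add_le (hφ z hz) (fun u => hlip z hz u (W z))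
        (hmin z hz)
      exact ⟨v, fun _ => hv⟩
    · exact ⟨0, fun h => absurd h hz⟩
  choose v hv using hex
  have hWK : ∀ z ∈ K, c * ‖W z - w₀‖ ^ 2 ≤ v z * ⟪ξ z, W z - w₀⟫_ℝ := fun z hz => by
    have h1 := (hv z hz).2 w₀
    have h2 := hG.add_sq_norm_le_of_forall_le hw₀ (W z)
    rw [← neg_sub (W z) w₀, inner_neg_right, norm_neg] at h1
    linarith
  have hWW : ∀ z ∈ K, ∀ z' ∈ K, c * ‖W z - W z'‖ ^ 2
      ≤ v z * ⟪ξ z, W z - W z'⟫_ℝ - v z' * ⟪ξ z', W z - W z'⟫_ℝ := fun z hz z' hz' => by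
    have h1 := (hv z hz).2 (W z')
    have h2 := (hv z' hz').2 (W z)
    rw [← neg_sub (W z) (W z'), inner_neg_right, norm_neg] at h1
    linarith
  have hscale : ∀ z y, ⟪ρ⁻¹ • ξ z, (c / ρ) • y⟫_ℝ = c / ρ ^ 2 * ⟪ξ z, y⟫_ℝ := fun z y => by
    rw [real_inner_smul_left, real_inner_smul_right]
    field_simp
  have hnorm : ∀ y : E, ‖(c / ρ) • y‖ ^ 2 = c / ρ ^ 2 * (c * ‖y‖ ^ 2) := fun y => by
    rw [norm_smul, Real.norm_of_nonneg (by positivity)]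
    field_simp
  have hdiff : ∀ z z', (c / ρ) • (W z - w₀) - (c / ρ) • (W z' - w₀) = (c / ρ) • (W z - W z') :=
    fun z z' => by rw [← smul_sub, sub_sub_sub_cancel_right]
  have hpos : 0 < c / ρ ^ 2 := by positivity
  obtain ⟨hi, hle⟩ := integral_abs_inner_sub_le_one (μ := μ) (X := fun z => ρ⁻¹ • ξ z)
    (W := fun z => (c / ρ) • (W z - w₀)) (v := v) (hξ.const_smul _)
    ((hW.sub_const w₀).const_smul _) hK
    (fun z hz => by
      rw [norm_smul, Real.norm_of_nonneg (by positivity), inv_mul_le_iff₀ hρ, mul_one]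
      exact hξK z hz)
    (fun z hz => (hv z hz).1)
    (fun z hz => by
      rw [hscale, hnorm, mul_left_comm (v z)]
      exact mul_le_mul_of_nonneg_left (hWK z hz) hpos.le)
    (fun z hz z' hz' => by
      rw [hdiff, hscale, hscale, hnorm, mul_left_comm (v z), mul_left_comm (v z'), ← mul_sub]
      exact mul_le_mul_of_nonneg_left (hWW z hz z' hz') hpos.le)
  simp only [hdiff, hscale, abs_mul, abs_of_pos hpos] at hi hle
  refine ⟨(integrable_const_mul_iff (isUnit_iff_ne_zero.2 hpos.ne') _).1 hi, ?_⟩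
  rw [integral_const_mul, div_mul_eq_mul_div, div_le_one (by positivity)] at hle
  rwa [le_div_iff₀ hc, mul_comm]

end StrongConvexity

section Losses

/-- On labels in `Y`, the loss is nonnegative, convex and `L`-Lipschitz in its first argument. -/
structure IsConvexLipschitzLoss (Y : Set ℝ) (L : ℝ) (ℓ : ℝ → ℝ → ℝ) : Prop where
  nonneg : ∀ a y, y ∈ Y → 0 ≤ ℓ a y
  convexOn : ∀ y ∈ Y, ConvexOn ℝ Set.univ fun a => ℓ a y
  lipschitz : ∀ y ∈ Y, ∀ a b, |ℓ a y - ℓ b y| ≤ L * |a - b|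

/-- Loss of the linear predictor `w` at the data point `z`. -/
def lossAt {d : ℕ} (ℓ : ℝ → ℝ → ℝ) (z : Pt d) (w : Vec d) : ℝ := ℓ (⟪z.1, w⟫_ℝ) z.2

variable {d : ℕ} {ℓ : ℝ → ℝ → ℝ} {Y : Set ℝ} {L R lam : ℝ} {z : Pt d}

lemma empRisk_eq {n : ℕ} (S : Fin n → Pt d) (w : Vec d) :
    empRisk ℓ S w = (n : ℝ)⁻¹ * ∑ k, lossAt ℓ (S k) w := rfl

lemma regRisk_eq {n : ℕ} (S : Fin n → Pt d) (h w : Vec d) :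
    regRisk ℓ lam S h w
      = (n : ℝ)⁻¹ * ∑ k, lossAt ℓ (S k) w + lam / 2 * ‖w - h‖ ^ 2 := rfl

namespace IsConvexLipschitzLoss

lemma lossAt_nonneg (hℓ : IsConvexLipschitzLoss Y L ℓ)
    (hz : z.2 ∈ Y) (w : Vec d) : 0 ≤ lossAt ℓ z w := hℓ.nonneg _ _ hz

lemma convexOn_lossAt (hℓ : IsConvexLipschitzLoss Y L ℓ)
    (hz : z.2 ∈ Y) : ConvexOn ℝ Set.univ (lossAt ℓ z) :=
  (hℓ.convexOn _ hz).comp_linearMap (innerSL ℝ z.1).toLinearMap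

lemma abs_lossAt_sub_le (hℓ : IsConvexLipschitzLoss Y L ℓ)
    (hz : z.2 ∈ Y) (u w : Vec d) :
    |lossAt ℓ z u - lossAt ℓ z w| ≤ L * |⟪z.1, u - w⟫_ℝ| := by
  rw [inner_sub_right]
  exact hℓ.lipschitz _ hz _ _

lemma abs_lossAt_sub_le_norm (hℓ : IsConvexLipschitzLoss Y L ℓ)
    (hL : 0 ≤ L) (hz : z.2 ∈ Y) (hzR : ‖z.1‖ ≤ R) (u w : Vec d) :
    |lossAt ℓ z u - lossAt ℓ z w| ≤ L * R * ‖u - w‖ := by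
  refine (hℓ.abs_lossAt_sub_le hz u w).trans ?_
  rw [mul_assoc]
  refine mul_le_mul_of_nonneg_left ((abs_real_inner_le_norm _ _).trans ?_) hL
  exact mul_le_mul_of_nonneg_right hzR (norm_nonneg _)

lemma continuous_lossAt (hℓ : IsConvexLipschitzLoss Y L ℓ)
    (hL : 0 ≤ L) (hz : z.2 ∈ Y) : Continuous (lossAt ℓ z) := by
  refine LipschitzWith.continuous (K := (L * ‖z.1‖).toNNReal)
    (LipschitzWith.of_dist_le_mul fun u w => ?_)
  rw [Real.dist_eq, dist_eq_norm, Real.coe_toNNReal _ (by positivity)]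
  exact hℓ.abs_lossAt_sub_le_norm hL hz le_rfl u w

lemma strongConvexOn_sum_add (hℓ : IsConvexLipschitzLoss Y L ℓ)
    {m : ℕ} {C : Fin m → Pt d} (hC : ∀ k, (C k).2 ∈ Y) {a : ℝ}
    (ha : 0 ≤ a) (h : Vec d) :
    StrongConvexOn Set.univ lam
      fun w => a * ∑ k, lossAt ℓ (C k) w + lam / 2 * ‖w - h‖ ^ 2 := by
  rw [strongConvexOn_iff_convex]
  have hsum : ConvexOn ℝ Set.univ fun w => ∑ k, lossAt ℓ (C k) w := by
    refine (Finset.univ.sum_induction (fun k => lossAt ℓ (C k)) (ConvexOn ℝ Set.univ)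
      (fun _ _ => ConvexOn.add) (convexOn_const 0 convex_univ)
      fun k _ => hℓ.convexOn_lossAt (hC k)).congr fun w _ => ?_
    rw [Finset.sum_apply]
  have hlin : ConvexOn ℝ Set.univ fun w => ⟪-(lam • h), w⟫_ℝ :=
    ((innerSL ℝ (-(lam • h))).toLinearMap).convexOn convex_univ
  refine (((hsum.smul ha).add hlin).add_const (lam / 2 * ‖h‖ ^ 2)).congr fun w _ => ?_
  simp only [Pi.add_apply, smul_eq_mul]
  rw [norm_sub_sq_real, inner_neg_left, real_inner_smul_left, real_inner_comm h w]
  ring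

lemma exists_forall_sum_add_le (hℓ : IsConvexLipschitzLoss Y L ℓ)
    (hL : 0 ≤ L) (hlam : 0 < lam) {m : ℕ} {C : Fin m → Pt d}
    (hC : ∀ k, (C k).2 ∈ Y) {a : ℝ} (ha : 0 ≤ a) (h : Vec d) :
    ∃ w, ∀ u, a * ∑ k, lossAt ℓ (C k) w + lam / 2 * ‖w - h‖ ^ 2
      ≤ a * ∑ k, lossAt ℓ (C k) u + lam / 2 * ‖u - h‖ ^ 2 := by
  have hcont : Continuous fun w => a * ∑ k, lossAt ℓ (C k) w + lam / 2 * ‖w - h‖ ^ 2 := by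
    have := fun k => hℓ.continuous_lossAt hL (hC k)
    fun_prop
  refine hcont.exists_forall_le (Filter.tendsto_atTop_mono
    (f := fun w => lam / 2 * ‖w - h‖ ^ 2) (fun w => ?_) ?_)
  · have : 0 ≤ ∑ k, lossAt ℓ (C k) w :=
      Finset.sum_nonneg fun k _ => hℓ.lossAt_nonneg (hC k) w
    exact le_add_of_nonneg_left (mul_nonneg ha this)
  · refine Filter.Tendsto.const_mul_atTop (by positivity)
      ((Filter.tendsto_pow_atTop two_ne_zero).comp ?_)
    exact (tendsto_dist_left_cocompact_atTop h).congr fun w => by rw [dist_comm, dist_eq_norm]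

lemma eq_of_forall_regRisk_le (hℓ : IsConvexLipschitzLoss Y L ℓ)
    (hlam : 0 < lam) {n : ℕ} {S : Fin n → Pt d}
    (hS : ∀ k, (S k).2 ∈ Y) {h w w' : Vec d} (hw : ∀ u, regRisk ℓ lam S h w ≤ regRisk ℓ lam S h u)
    (hw' : ∀ u, regRisk ℓ lam S h w' ≤ regRisk ℓ lam S h u) : w = w' := by
  have hs : StrongConvexOn Set.univ lam (regRisk ℓ lam S h) :=
    hℓ.strongConvexOn_sum_add hS (by positivity) h
  have h1 := hs.add_sq_norm_le_of_forall_le hw w'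
  have h2 : lam / 2 * ‖w' - w‖ ^ 2 ≤ 0 := by linarith [hw' w]
  have h3 : ‖w' - w‖ ^ 2 ≤ 0 := by
    by_contra! hpos
    have : 0 < lam / 2 * ‖w' - w‖ ^ 2 := by positivity
    linarith
  have h4 : ‖w' - w‖ = 0 := pow_eq_zero_iff two_ne_zero |>.1 (le_antisymm h3 (sq_nonneg _))
  exact (sub_eq_zero.1 (norm_eq_zero.1 h4)).symm

lemma norm_sub_le_of_forall_regRisk_le (hℓ : IsConvexLipschitzLoss Y L ℓ)
    (hL : 0 ≤ L) (hlam : 0 < lam) {n : ℕ} {S : Fin n → Pt d}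
    (hR : 0 ≤ R) (hS : ∀ k, (S k).2 ∈ Y) (hSR : ∀ k, ‖(S k).1‖ ≤ R) {h w : Vec d}
    (hw : ∀ u, regRisk ℓ lam S h w ≤ regRisk ℓ lam S h u) : ‖w - h‖ ≤ 2 * (L * R) / lam := by
  have h1 := hw h
  simp only [regRisk_eq, sub_self, norm_zero] at h1
  have h2 : (n : ℝ)⁻¹ * ∑ k, lossAt ℓ (S k) h - (n : ℝ)⁻¹ * ∑ k, lossAt ℓ (S k) w
      ≤ L * R * ‖w - h‖ := by
    rw [← mul_sub, ← Finset.sum_sub_distrib]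
    have : ∑ k, (lossAt ℓ (S k) h - lossAt ℓ (S k) w) ≤ n * (L * R * ‖w - h‖) := by
      refine (Finset.sum_le_card_nsmul _ _ (L * R * ‖w - h‖) fun k _ => ?_).trans_eq (by simp)
      rw [norm_sub_rev]
      exact (le_abs_self _).trans (hℓ.abs_lossAt_sub_le_norm hL (hS k) (hSR k) h w)
    rcases Nat.eq_zero_or_pos n with rfl | hn
    · simp; positivity
    · rwa [inv_mul_le_iff₀ (by exact_mod_cast hn)]
  rw [le_div_iff₀ hlam]
  by_contra! hlt
  have hpos : 0 < ‖w - h‖ := by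
    by_contra! h0
    have : ‖w - h‖ = 0 := le_antisymm h0 (norm_nonneg _)
    rw [this, zero_mul] at hlt
    nlinarith [mul_nonneg hL hR]
  nlinarith

/-- Mean effect, on the loss of an unused example `p.2`, of swapping `p.2` into a training set
`Fin.cons p.1 C` in place of `p.1`. -/
lemma integral_abs_inner_erm_cons_sub_le (hℓ : IsConvexLipschitzLoss Y L ℓ)
    (hL : 0 ≤ L) (hR : 0 ≤ R) (hlam : 0 < lam)
    {μ : Measure (Pt d)} [IsProbabilityMeasure μ] (hμ : ∀ᵐ z ∂μ, z.2 ∈ Y ∧ ‖z.1‖ ≤ R) {m : ℕ}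
    {C : Fin m → Pt d} (hC : ∀ k, (C k).2 ∈ Y) {h : Vec d}
    {erm : (Fin (m + 1) → Pt d) → Vec d} (hmeas : Measurable erm)
    (herm : ∀ S w, regRisk ℓ lam S h (erm S) ≤ regRisk ℓ lam S h w) :
    Integrable (fun p : Pt d × Pt d =>
        L * |⟪p.2.1, erm (Fin.cons p.1 C) - erm (Fin.cons p.2 C)⟫_ℝ|) (μ.prod μ) ∧
      ∫ p : Pt d × Pt d, L * |⟪p.2.1, erm (Fin.cons p.1 C) - erm (Fin.cons p.2 C)⟫_ℝ| ∂μ.prod μ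
        ≤ L ^ 2 * R ^ 2 / (lam * (m + 1 : ℕ)) := by
  set n : ℝ := ((m + 1 : ℕ) : ℝ) with hn
  have hn0 : 0 < n := by positivity
  have hcons : Measurable fun z : Pt d => (Fin.cons z C : Fin (m + 1) → Pt d) := by
    refine measurable_pi_iff.2 fun k => ?_
    refine Fin.cases ?_ (fun k => ?_) k
    · exact measurable_id
    · simp
  have hrisk : ∀ z u, regRisk ℓ lam (Fin.cons z C : Fin (m + 1) → Pt d) h u
      = n⁻¹ * lossAt ℓ z u
        + (n⁻¹ * ∑ k, lossAt ℓ (C k) u + lam / 2 * ‖u - h‖ ^ 2) := fun z u => by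
    rw [regRisk_eq, Fin.sum_univ_succ]
    simp only [Fin.cons_zero, Fin.cons_succ]
    ring
  obtain ⟨hi, hle⟩ := StrongConvexOn.integral_abs_inner_sub_le (μ := μ)
    (hℓ.strongConvexOn_sum_add (lam := lam) hC (inv_nonneg.2 hn0.le) h) hlam
    (hℓ.exists_forall_sum_add_le hL hlam hC (inv_nonneg.2 hn0.le) h)
    (φ := fun z u => n⁻¹ * lossAt ℓ z u) (ξ := fun z => (L / n) • z.1)
    (W := fun z => erm (Fin.cons z C)) (K := {z | z.2 ∈ Y ∧ ‖z.1‖ ≤ R}) (ρ := L * R / n)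
    (by positivity) (Measurable.const_smul measurable_fst (L / n)) (hmeas.comp hcons) hμ
    (fun z hz => by
      rw [norm_smul, Real.norm_of_nonneg (by positivity), mul_div_right_comm]
      exact mul_le_mul_of_nonneg_left hz.2 (by positivity))
    (fun z hz => (hℓ.convexOn_lossAt hz.1).smul (inv_nonneg.2 hn0.le))
    (fun z hz u w => by
      rw [real_inner_smul_left, abs_mul, abs_of_nonneg (by positivity : 0 ≤ L / n), ← mul_sub,
        div_mul_eq_mul_div, inv_mul_eq_div]
      exact div_le_div_of_nonneg_right
        ((le_abs_self _).trans (hℓ.abs_lossAt_sub_le hz.1 u w)) hn0.le)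
    (fun z _ u => by
      rw [← hrisk, ← hrisk]
      exact herm _ u)
  have e : ∀ p : Pt d × Pt d, |⟪(L / n) • p.2.1, erm (Fin.cons p.1 C) - erm (Fin.cons p.2 C)⟫_ℝ|
      = n⁻¹ * (L * |⟪p.2.1, erm (Fin.cons p.1 C) - erm (Fin.cons p.2 C)⟫_ℝ|) := fun p => by
    rw [real_inner_smul_left, abs_mul, abs_of_nonneg (by positivity : 0 ≤ L / n)]
    ring
  simp only [e] at hi hle
  refine ⟨(integrable_const_mul_iff (isUnit_iff_ne_zero.2 (inv_ne_zero hn0.ne')) _).1 hi, ?_⟩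
  rw [integral_const_mul, inv_mul_le_iff₀ hn0] at hle
  refine hle.trans_eq ?_
  field_simp

end IsConvexLipschitzLoss

end Losses

section LeaveOneOut

variable {d : ℕ} {ℓ : ℝ → ℝ → ℝ} {Y : Set ℝ} {L R lam : ℝ} {μ : Measure (Pt d)}
  [IsProbabilityMeasure μ] {h : Vec d}

lemma ae_pi_forall {ι Z : Type*} [Fintype ι] [MeasurableSpace Z] {μ : Measure Z} [SigmaFinite μ]
    {p : Z → Prop} (hp : ∀ᵐ z ∂μ, p z) : ∀ᵐ U ∂Measure.pi fun _ : ι => μ, ∀ i, p (U i) :=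
  ae_all_iff.2 fun i => (Measure.quasiMeasurePreserving_eval (fun _ : ι => μ) i).ae hp

/-- Bound on the loss increase at `U i` between the predictors trained without `U j` and
without `U i`. -/
def leaveOneOutGap {n : ℕ} (L : ℝ) (erm : (Fin n → Pt d) → Vec d) (i j : Fin (n + 1))
    (U : Fin (n + 1) → Pt d) : ℝ :=
  L * |⟪(U i).1, erm (i.removeNth U) - erm (j.removeNth U)⟫_ℝ|

lemma Fin.sum_removeNth {n : ℕ} (f : Pt d → ℝ) (i : Fin (n + 1)) (U : Fin (n + 1) → Pt d) :
    ∑ k, f (i.removeNth U k) = ∑ k, f (U k) - f (U i) := by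
  rw [Fin.sum_univ_succAbove _ i]
  simp [Fin.removeNth]

lemma IsConvexLipschitzLoss.erm_removeNth_comp_perm (hℓ : IsConvexLipschitzLoss Y L ℓ)
    (hlam : 0 < lam) {n : ℕ} {erm : (Fin n → Pt d) → Vec d}
    (herm : ∀ S w, regRisk ℓ lam S h (erm S) ≤ regRisk ℓ lam S h w)
    {U : Fin (n + 1) → Pt d} (hU : ∀ k, (U k).2 ∈ Y) (σ : Equiv.Perm (Fin (n + 1)))
    (i : Fin (n + 1)) : erm (i.removeNth fun k => U (σ k)) = erm ((σ i).removeNth U) := by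
  have hrisk : ∀ w, regRisk ℓ lam (i.removeNth fun k => U (σ k)) h w
      = regRisk ℓ lam ((σ i).removeNth U) h w := fun w => by
    rw [regRisk_eq, regRisk_eq, Fin.sum_removeNth (fun z => lossAt ℓ z w),
      Fin.sum_removeNth (fun z => lossAt ℓ z w), Equiv.sum_comp σ fun k => lossAt ℓ (U k) w]
  refine hℓ.eq_of_forall_regRisk_le hlam (S := (σ i).removeNth U) (fun k => hU _) (fun u => ?_)
    (herm _)
  rw [← hrisk, ← hrisk]
  exact herm _ u

lemma integrable_and_integral_le_of_lintegral_le {Z : Type*} [MeasurableSpace Z] {ν : Measure Z}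
    {f : Z → ℝ} {B : ℝ} (hf : Measurable f) (hf0 : ∀ z, 0 ≤ f z) (hB : 0 ≤ B)
    (hle : ∫⁻ z, ENNReal.ofReal (f z) ∂ν ≤ ENNReal.ofReal B) :
    Integrable f ν ∧ ∫ z, f z ∂ν ≤ B := by
  refine ⟨⟨hf.aestronglyMeasurable, ?_⟩, ?_⟩
  · rw [hasFiniteIntegral_iff_ofReal (Filter.Eventually.of_forall hf0)]
    exact hle.trans_lt ENNReal.ofReal_lt_top
  · rw [integral_eq_lintegral_of_nonneg_ae (Filter.Eventually.of_forall hf0)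
      hf.aestronglyMeasurable]
    exact ENNReal.toReal_le_of_le_ofReal hB hle

lemma measurePreserving_pi_succ_succ {Z : Type*} [MeasurableSpace Z] (μ : Measure Z)
    [SigmaFinite μ] (m : ℕ) :
    MeasurePreserving
      (fun U : Fin (m + 2) → Z => ((U 1, U 0), fun k : Fin m => U k.succ.succ))
      (Measure.pi fun _ => μ) ((μ.prod μ).prod (Measure.pi fun _ => μ)) := by
  have h1 := measurePreserving_piFinSuccAbove (fun _ : Fin (m + 2) => μ) 0
  have h2 := measurePreserving_piFinSuccAbove (fun _ : Fin (m + 1) => μ) 0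
  have h3 := (MeasurePreserving.id μ).prod h2
  have h4 := (measurePreserving_prodAssoc μ μ (Measure.pi fun _ : Fin m => μ)).symm
  have h5 := (Measure.measurePreserving_swap (μ := μ) (ν := μ)).prod
    (MeasurePreserving.id (Measure.pi fun _ : Fin m => μ))
  exact h5.comp (h4.comp (h3.comp h1))

lemma measurable_leaveOneOutGap {n : ℕ} {erm : (Fin n → Pt d) → Vec d} (hmeas : Measurable erm)
    (i j : Fin (n + 1)) : Measurable (leaveOneOutGap L erm i j) := by
  have hrem : ∀ i : Fin (n + 1), Measurable fun U : Fin (n + 1) → Pt d => i.removeNth U :=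
    fun i => measurable_pi_iff.2 fun k => measurable_pi_apply _
  exact (((measurable_pi_apply i).fst.inner
    ((hmeas.comp (hrem i)).sub (hmeas.comp (hrem j)))).abs).const_mul L

lemma IsConvexLipschitzLoss.integral_leaveOneOutGap_zero_one_le
    (hℓ : IsConvexLipschitzLoss Y L ℓ) (hL : 0 ≤ L) (hR : 0 ≤ R) (hlam : 0 < lam)
    (hμ : ∀ᵐ z ∂μ, z.2 ∈ Y ∧ ‖z.1‖ ≤ R) {m : ℕ}
    {erm : (Fin (m + 1) → Pt d) → Vec d} (hmeas : Measurable erm)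
    (herm : ∀ S w, regRisk ℓ lam S h (erm S) ≤ regRisk ℓ lam S h w) :
    Integrable (leaveOneOutGap L erm 0 1) (Measure.pi fun _ => μ) ∧
      ∫ U, leaveOneOutGap L erm 0 1 U ∂(Measure.pi fun _ => μ)
        ≤ L ^ 2 * R ^ 2 / (lam * (m + 1 : ℕ)) := by
  refine integrable_and_integral_le_of_lintegral_le (measurable_leaveOneOutGap hmeas 0 1)
    (fun U => mul_nonneg hL (abs_nonneg _)) (by positivity) ?_
  set H : (Pt d × Pt d) × (Fin m → Pt d) → ℝ := fun q =>
    L * |⟪q.1.2.1, erm (Fin.cons q.1.1 q.2) - erm (Fin.cons q.1.2 q.2)⟫_ℝ| with hH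
  have hcons : ∀ f : (Pt d × Pt d) × (Fin m → Pt d) → Pt d, Measurable f →
      Measurable fun q => (Fin.cons (f q) q.2 : Fin (m + 1) → Pt d) := fun f hf => by
    refine measurable_pi_iff.2 fun k => ?_
    refine Fin.cases ?_ (fun k => ?_) k
    · simpa using hf
    · exact (measurable_pi_apply k).comp measurable_snd
  have hHm : Measurable H :=
    ((measurable_fst.snd.fst.inner ((hmeas.comp (hcons _ measurable_fst.fst)).sub
      (hmeas.comp (hcons _ measurable_fst.snd)))).abs).const_mul L
  have e : ∀ U : Fin (m + 2) → Pt d, leaveOneOutGap L erm 0 1 U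
      = H ((U 1, U 0), fun k : Fin m => U k.succ.succ) := fun U => by
    have e0 : (0 : Fin (m + 2)).removeNth U = Fin.cons (U 1) fun k : Fin m => U k.succ.succ := by
      funext k
      refine Fin.cases ?_ (fun k => ?_) k <;> simp [Fin.removeNth]
    have e1 : (1 : Fin (m + 2)).removeNth U = Fin.cons (U 0) fun k : Fin m => U k.succ.succ := by
      funext k
      refine Fin.cases ?_ (fun k => ?_) k <;> simp [Fin.removeNth]
    simp only [leaveOneOutGap, hH, e0, e1]
  simp only [e]
  rw [(measurePreserving_pi_succ_succ μ m).lintegral_comp hHm.ennreal_ofReal,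
    lintegral_prod_symm _ hHm.ennreal_ofReal.aemeasurable]
  refine (lintegral_mono_ae (g := fun _ => ENNReal.ofReal (L ^ 2 * R ^ 2 / (lam * (m + 1 : ℕ))))
    ?_).trans_eq (by simp)
  filter_upwards [ae_pi_forall (ι := Fin m) (hμ.mono fun z hz => hz.1)] with C hC
  obtain ⟨hi, hle⟩ := hℓ.integral_abs_inner_erm_cons_sub_le hL hR hlam hμ hC hmeas herm
  rw [← ofReal_integral_eq_lintegral_ofReal hi
    (Filter.Eventually.of_forall fun p => mul_nonneg hL (abs_nonneg _))]
  exact ENNReal.ofReal_le_ofReal hle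

lemma measurePreserving_comp_perm {Z : Type*} [MeasurableSpace Z] (μ : Measure Z) [SigmaFinite μ]
    {n : ℕ} (σ : Equiv.Perm (Fin n)) :
    MeasurePreserving (fun (U : Fin n → Z) k => U (σ k)) (Measure.pi fun _ => μ)
      (Measure.pi fun _ => μ) := by
  have := measurePreserving_piCongrLeft (fun _ : Fin n => μ) σ.symm
  convert this using 1
  funext U k
  have := Equiv.piCongrLeft_apply_apply (fun _ : Fin n => Z) σ.symm U (σ k)
  rw [Equiv.symm_apply_apply] at this
  exact this.symm

lemma exists_perm_zero_one {m : ℕ} {i j : Fin (m + 2)} (hij : i ≠ j) :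
    ∃ σ : Equiv.Perm (Fin (m + 2)), σ 0 = i ∧ σ 1 = j := by
  refine ⟨Equiv.swap 0 i * Equiv.swap 1 (Equiv.swap 0 i j), ?_, by simp⟩
  have h0 : Equiv.swap 0 i j ≠ 0 := fun h0 => hij (by
    rw [Equiv.swap_apply_eq_iff, Equiv.swap_apply_left] at h0
    exact h0.symm)
  rw [Equiv.Perm.mul_apply, Equiv.swap_apply_of_ne_of_ne (by simp) h0.symm,
    Equiv.swap_apply_left]

lemma IsConvexLipschitzLoss.integral_leaveOneOutGap_le
    (hℓ : IsConvexLipschitzLoss Y L ℓ) (hL : 0 ≤ L) (hR : 0 ≤ R) (hlam : 0 < lam)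
    (hμ : ∀ᵐ z ∂μ, z.2 ∈ Y ∧ ‖z.1‖ ≤ R) {m : ℕ}
    {erm : (Fin (m + 1) → Pt d) → Vec d} (hmeas : Measurable erm)
    (herm : ∀ S w, regRisk ℓ lam S h (erm S) ≤ regRisk ℓ lam S h w) {i j : Fin (m + 2)}
    (hij : i ≠ j) :
    Integrable (leaveOneOutGap L erm i j) (Measure.pi fun _ => μ) ∧
      ∫ U, leaveOneOutGap L erm i j U ∂(Measure.pi fun _ => μ)
        ≤ L ^ 2 * R ^ 2 / (lam * (m + 1 : ℕ)) := by
  obtain ⟨σ, h0, h1⟩ := exists_perm_zero_one hij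
  obtain ⟨hi, hle⟩ := hℓ.integral_leaveOneOutGap_zero_one_le hL hR hlam hμ hmeas herm
  have hσ := measurePreserving_comp_perm μ σ
  have e : (fun U => leaveOneOutGap L erm 0 1 fun k => U (σ k))
      =ᵐ[Measure.pi fun _ : Fin (m + 2) => μ] leaveOneOutGap L erm i j := by
    filter_upwards [ae_pi_forall (ι := Fin (m + 2)) (hμ.mono fun z hz => hz.1)] with U hU
    simp only [leaveOneOutGap, hℓ.erm_removeNth_comp_perm hlam herm hU σ, h0, h1]
  refine ⟨(hσ.integrable_comp_of_integrable hi).congr e, ?_⟩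
  rw [← integral_congr_ae e]
  have := integral_map (μ := Measure.pi fun _ : Fin (m + 2) => μ) hσ.measurable.aemeasurable
    (measurable_leaveOneOutGap (L := L) hmeas 0 1).aestronglyMeasurable
  rw [hσ.map_eq] at this
  rwa [← this]

end LeaveOneOut

section LipschitzFamilies

variable {E Z Ω : Type*} [NormedAddCommGroup E] [MeasurableSpace Z] [MeasurableSpace Ω]
  {μ : Measure Z} {g : E → Z → ℝ} {C : ℝ}

lemma isClosed_setOf_integrable [IsFiniteMeasure μ]
    (hg : ∀ᵐ z ∂μ, ∀ u w, |g u z - g w z| ≤ C * ‖u - w‖) :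
    IsClosed {w | Integrable (g w) μ} := by
  refine IsSeqClosed.isClosed fun w w₀ hw hlim => ?_
  have hconv : ∀ᵐ z ∂μ, Filter.Tendsto (fun k => g (w k) z) Filter.atTop (nhds (g w₀ z)) := by
    filter_upwards [hg] with z hz
    rw [tendsto_iff_norm_sub_tendsto_zero] at hlim ⊢
    refine squeeze_zero (fun _ => norm_nonneg _) (fun k => hz (w k) w₀) ?_
    simpa using hlim.const_mul C
  have hmeas := aestronglyMeasurable_of_tendsto_ae Filter.atTop (fun k => (hw k).1) hconv
  refine Integrable.mono' ((hw 0).norm.add (integrable_const (C * ‖w₀ - w 0‖))) hmeas ?_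
  filter_upwards [hg] with z hz
  have h1 := hz w₀ (w 0)
  have h2 := norm_sub_norm_le (g w₀ z) (g (w 0) z)
  simp only [Pi.add_apply]
  rw [Real.norm_eq_abs (g w₀ z - _)] at h2
  linarith

variable [SecondCountableTopology E] [MeasurableSpace E] [BorelSpace E]

/-- A Lipschitz family of functions, restricted to its integrable members, is jointly measurable
after modification on a null set that does not depend on the member. -/
lemma exists_measurable_indicator_uncurry
    (hg : ∀ᵐ z ∂μ, ∀ u w, |g u z - g w z| ≤ C * ‖u - w‖) :
    ∃ K : Set Z, MeasurableSet K ∧ (∀ᵐ z ∂μ, z ∈ K) ∧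
      Measurable (Function.uncurry fun w : {w | Integrable (g w) μ} => K.indicator (g w)) := by
  rcases isEmpty_or_nonempty {w | Integrable (g w) μ} with hI | hI
  · exact ⟨Set.univ, MeasurableSet.univ, by simp, measurable_of_empty _⟩
  set q := TopologicalSpace.denseSeq {w | Integrable (g w) μ}
  have hq : ∀ k, AEStronglyMeasurable (g (q k)) μ := fun k => (q k).2.1
  have hae : ∀ᵐ z ∂μ, (∀ u w, |g u z - g w z| ≤ C * ‖u - w‖) ∧ ∀ k, g (q k) z = (hq k).mk _ z :=
    hg.and (ae_all_iff.2 fun k => (hq k).ae_eq_mk)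
  obtain ⟨N, hN, hNm, hN0⟩ := exists_measurable_superset_of_null (ae_iff.1 hae)
  have hK : ∀ z ∈ Nᶜ, (∀ u w, |g u z - g w z| ≤ C * ‖u - w‖) ∧ ∀ k, g (q k) z = (hq k).mk _ z :=
    fun z hz => by
      by_contra hcon
      exact hz (hN hcon)
  have hcont : ∀ z, Continuous fun w : {w | Integrable (g w) μ} => Nᶜ.indicator (g w) z := by
    intro z
    by_cases hz : z ∈ Nᶜ
    · simp only [Set.indicator_of_mem hz]
      refine LipschitzWith.continuous (K := C.toNNReal)
        (LipschitzWith.of_dist_le_mul fun u w => ?_)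
      rw [Real.dist_eq, Subtype.dist_eq, dist_eq_norm]
      exact ((hK z hz).1 u w).trans
        (mul_le_mul_of_nonneg_right (Real.le_coe_toNNReal C) (norm_nonneg _))
    · simp only [Set.indicator_of_notMem hz]
      exact continuous_const
  refine ⟨Nᶜ, hNm.compl, measure_eq_zero_iff_ae_notMem.1 hN0,
    measurable_uncurry_of_continuous_of_measurable hcont fun w => ?_⟩
  have hqm : ∀ k, Measurable (Nᶜ.indicator (g (q k))) := fun k => by
    have : Nᶜ.indicator (g (q k)) = Nᶜ.indicator ((hq k).mk _) :=
      Set.indicator_congr fun z hz => (hK z hz).2 k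
    rw [this]
    exact (hq k).stronglyMeasurable_mk.measurable.indicator hNm.compl
  obtain ⟨u, hu, hlim⟩ := mem_closure_iff_seq_limit.1 (TopologicalSpace.denseRange_denseSeq _ w)
  refine measurable_of_tendsto_metrizable (f := fun k => Nᶜ.indicator (g (u k))) (fun k => ?_)
    (tendsto_pi_nhds.2 fun z => ((hcont z).tendsto w).comp hlim)
  obtain ⟨j, hj⟩ := hu k
  rw [← hj]
  exact hqm j

/-- For a nonnegative Lipschitz family `g` and a bounded measurable choice `W ω` of members, the
integrals `∫ g (W ω)` come from an integrable function that lies below `g (W ω)`. -/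
lemma exists_integrable_le_comp [IsFiniteMeasure μ] {ν : Measure Ω} [IsFiniteMeasure ν]
    {W : Ω → E} {h : E} {r : ℝ}
    (hC : 0 ≤ C) (hg : ∀ᵐ z ∂μ, ∀ u w, |g u z - g w z| ≤ C * ‖u - w‖)
    (hg0 : ∀ᵐ z ∂μ, ∀ w, 0 ≤ g w z) (hW : Measurable W) (hWr : ∀ᵐ ω ∂ν, ‖W ω - h‖ ≤ r) :
    ∃ f : Z × Ω → ℝ, Integrable f (μ.prod ν) ∧
      (∀ ω, ∫ z, f (z, ω) ∂μ = ∫ z, g (W ω) z ∂μ) ∧ ∀ᵐ z ∂μ, ∀ ω, f (z, ω) ≤ g (W ω) z := by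
  classical
  by_cases hI : ∃ w₀, Integrable (g w₀) μ
  swap
  · push Not at hI
    exact ⟨0, integrable_zero _ _ _, fun ω => by simp [integral_undef (hI (W ω))],
      hg0.mono fun z hz ω => hz _⟩
  obtain ⟨w₀, hw₀⟩ := hI
  obtain ⟨K, hKm, hK, hKg⟩ := exists_measurable_indicator_uncurry hg
  set I : Set E := {w | Integrable (g w) μ} with hIdef
  have hIm : MeasurableSet I := (isClosed_setOf_integrable hg).measurableSet
  set ρ : Ω → I := fun ω => if hω : W ω ∈ I then ⟨W ω, hω⟩ else ⟨w₀, hw₀⟩ with hρ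
  have hρm : Measurable ρ := by
    have : (fun ω => (ρ ω : E)) = fun ω => if W ω ∈ I then W ω else w₀ := by
      funext ω
      by_cases hω : W ω ∈ I <;> simp [hρ, hω]
    refine measurable_comap_iff.2 ?_
    change Measurable fun ω => (ρ ω : E)
    rw [this]
    exact Measurable.ite (hW hIm) hW measurable_const
  set f : Z × Ω → ℝ := fun p => if W p.2 ∈ I then K.indicator (g (W p.2)) p.1 else 0 with hf
  have hfm : Measurable f := by
    have : f = fun p => if W p.2 ∈ I then
        (Function.uncurry fun w : I => K.indicator (g w)) (ρ p.2, p.1) else 0 := by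
      funext p
      by_cases hp : W p.2 ∈ I <;> simp [hf, hρ, hp, Function.uncurry]
    rw [this]
    exact Measurable.ite (hW.comp measurable_snd hIm)
      (hKg.comp ((hρm.comp measurable_snd).prodMk measurable_fst)) measurable_const
  refine ⟨f, ?_, fun ω => ?_, ?_⟩
  · refine Integrable.mono' ((hw₀.norm.comp_fst ν).add
      (integrable_const (C * (r + ‖h - w₀‖)))) hfm.aestronglyMeasurable ?_
    filter_upwards [Measure.quasiMeasurePreserving_fst.ae hg,
      Measure.quasiMeasurePreserving_snd.ae hWr] with p hp hr
    have h1 := hp (W p.2) w₀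
    have h2 := norm_sub_norm_le (g (W p.2) p.1) (g w₀ p.1)
    have h3 : C * ‖W p.2 - w₀‖ ≤ C * (r + ‖h - w₀‖) := by
      refine mul_le_mul_of_nonneg_left ?_ hC
      rw [← sub_add_sub_cancel (W p.2) h w₀]
      exact (norm_add_le _ _).trans (by linarith)
    rw [Real.norm_eq_abs (g (W p.2) p.1 - _)] at h2
    have h4 : ‖f p‖ ≤ ‖g (W p.2) p.1‖ := by
      simp only [hf]
      split_ifs
      · exact norm_indicator_le_norm_self _ _
      · simp
    simp only [Pi.add_apply]
    linarith
  · by_cases hω : W ω ∈ I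
    · refine integral_congr_ae (hK.mono fun z hz => ?_)
      simp [hf, hω, hz]
    · simp only [hf, hω, if_false, integral_zero]
      exact (integral_undef hω).symm
  · filter_upwards [hK, hg0] with z hz h0 ω
    simp only [hf]
    split_ifs
    · simp [hz]
    · exact h0 _

end LipschitzFamilies

/-- Generalization error of the biased ERM:
`E_{Z_n∼μⁿ}[R_μ(w_h(Z_n)) - R_{Z_n}(w_h(Z_n))] ≤ L²R²/(λn)`. -/
theorem stmt15
    (d n : ℕ) (hd : 1 ≤ d) (hn : 1 ≤ n)
    (R L lam : ℝ) (hR : 0 ≤ R) (hL : 0 ≤ L) (hlam : 0 < lam)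
    (Y : Set ℝ) (ℓ : ℝ → ℝ → ℝ)
    (hℓ0 : ∀ a y, y ∈ Y → 0 ≤ ℓ a y)
    (hℓconv : ∀ y ∈ Y, ConvexOn ℝ Set.univ fun a => ℓ a y)
    (hℓlip : ∀ y ∈ Y, ∀ a b, |ℓ a y - ℓ b y| ≤ L * |a - b|)
    (μ : Measure (Pt d)) [IsProbabilityMeasure μ]
    (hμY : ∀ᵐ z ∂μ, z.2 ∈ Y) (hμR : ∀ᵐ z ∂μ, ‖z.1‖ ≤ R)
    (h : Vec d)
    -- the biased ERM, assumed measurable in the data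
    (erm : (Fin n → Pt d) → Vec d)
    (hermmeas : Measurable erm)
    (herm : ∀ S w, regRisk ℓ lam S h (erm S) ≤ regRisk ℓ lam S h w)
    (hInt : Integrable (fun S => trueRisk ℓ μ (erm S) - empRisk ℓ S (erm S))
      (Measure.pi fun _ : Fin n => μ)) :
    ∫ S, (trueRisk ℓ μ (erm S) - empRisk ℓ S (erm S))
        ∂(Measure.pi fun _ : Fin n => μ)
      ≤ L ^ 2 * R ^ 2 / (lam * n) := by
  obtain ⟨m, rfl⟩ : ∃ m, n = m + 1 := ⟨n - 1, by omega⟩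
  have hℓ : IsConvexLipschitzLoss Y L ℓ := ⟨hℓ0, hℓconv, hℓlip⟩
  have hμ : ∀ᵐ z ∂μ, z.2 ∈ Y ∧ ‖z.1‖ ≤ R := hμY.and hμR
  set ν : Measure (Fin (m + 1) → Pt d) := Measure.pi fun _ => μ with hν
  set B : ℝ := L ^ 2 * R ^ 2 / (lam * (m + 1 : ℕ))
  obtain ⟨f, hf, hfT, hfle⟩ := exists_integrable_le_comp (μ := μ) (ν := ν)
    (g := fun w z => lossAt ℓ z w) (C := L * R) (W := erm) (h := h) (r := 2 * (L * R) / lam)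
    (by positivity) (hμ.mono fun z hz => hℓ.abs_lossAt_sub_le_norm hL hz.1 hz.2)
    (hμY.mono fun z hz => hℓ.lossAt_nonneg hz) hermmeas
    ((ae_pi_forall hμ).mono fun S hS => hℓ.norm_sub_le_of_forall_regRisk_le hL hlam hR
      (fun k => (hS k).1) (fun k => (hS k).2) (herm S))
  have hT : Integrable (fun S => trueRisk ℓ μ (erm S)) ν :=
    hf.integral_prod_right.congr (Filter.Eventually.of_forall hfT)
  have hfint : ∫ p, f p ∂μ.prod ν = ∫ S, trueRisk ℓ μ (erm S) ∂ν := by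
    rw [integral_prod_symm f hf]
    exact integral_congr_ae (Filter.Eventually.of_forall hfT)
  have hE : Integrable (fun S => empRisk ℓ S (erm S)) ν :=
    (hT.sub hInt).congr (Filter.Eventually.of_forall fun S => by simp)
  rw [integral_sub hT hE]
  set ν' : Measure (Fin (m + 2) → Pt d) := Measure.pi fun _ => μ with hν'
  have hmp : ∀ i : Fin (m + 2), MeasurePreserving
      (MeasurableEquiv.piFinSuccAbove (fun _ : Fin (m + 2) => Pt d) i) ν' (μ.prod ν) := fun i =>
    measurePreserving_piFinSuccAbove (fun _ : Fin (m + 2) => μ) i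
  have hfi : ∀ i : Fin (m + 2), Integrable (fun U => f (U i, i.removeNth U)) ν' := fun i =>
    (hmp i).integrable_comp_of_integrable hf
  have hfi_eq : ∀ i : Fin (m + 2),
      ∫ U, f (U i, i.removeNth U) ∂ν' = ∫ S, trueRisk ℓ μ (erm S) ∂ν := fun i =>
    ((hmp i).integral_comp' f).trans hfint
  have hE' : Integrable (fun U : Fin (m + 2) → Pt d =>
      empRisk ℓ ((0 : Fin (m + 2)).removeNth U) (erm ((0 : Fin (m + 2)).removeNth U))) ν' :=
    (hmp 0).integrable_comp_of_integrable (hE.comp_snd μ)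
  have hE'_eq : ∫ U : Fin (m + 2) → Pt d,
      empRisk ℓ ((0 : Fin (m + 2)).removeNth U) (erm ((0 : Fin (m + 2)).removeNth U)) ∂ν'
      = ∫ S, empRisk ℓ S (erm S) ∂ν := by
    refine ((hmp 0).integral_comp' fun p => empRisk ℓ p.2 (erm p.2)).trans ?_
    rw [integral_fun_snd (fun S => empRisk ℓ S (erm S))]
    simp
  have hgap : ∀ k : Fin (m + 1), Integrable (leaveOneOutGap L erm k.succ 0) ν' ∧
      ∫ U, leaveOneOutGap L erm k.succ 0 U ∂ν' ≤ B := fun k =>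
    hℓ.integral_leaveOneOutGap_le hL hR hlam hμ hermmeas herm (Fin.succ_ne_zero k)
  have hn0 : (0 : ℝ) < (m + 1 : ℕ) := by positivity
  have hpt : ∀ᵐ U ∂ν', ∑ k : Fin (m + 1), f (U k.succ, k.succ.removeNth U)
      ≤ (m + 1 : ℕ) * empRisk ℓ ((0 : Fin (m + 2)).removeNth U)
          (erm ((0 : Fin (m + 2)).removeNth U))
        + ∑ k : Fin (m + 1), leaveOneOutGap L erm k.succ 0 U := by
    filter_upwards [ae_pi_forall (ι := Fin (m + 2)) hfle,
      ae_pi_forall (ι := Fin (m + 2)) hμY] with U hU hY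
    rw [empRisk_eq, mul_inv_cancel_left₀ hn0.ne', ← Finset.sum_add_distrib]
    refine Finset.sum_le_sum fun k _ => (hU k.succ _).trans ?_
    have h1 := (le_abs_self _).trans (hℓ.abs_lossAt_sub_le (hY k.succ)
      (erm (k.succ.removeNth U)) (erm ((0 : Fin (m + 2)).removeNth U)))
    have h2 : (0 : Fin (m + 2)).removeNth U k = U k.succ := by simp [Fin.removeNth]
    rw [h2, leaveOneOutGap]
    linarith
  have hle := integral_mono_ae (integrable_finsetSum _ fun k _ => hfi k.succ)
    ((hE'.const_mul _).add (integrable_finsetSum _ fun k _ => (hgap k).1)) hpt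
  simp only [Pi.add_apply] at hle
  rw [integral_add (hE'.const_mul _) (integrable_finsetSum _ fun k _ => (hgap k).1),
    integral_finsetSum _ fun k _ => hfi k.succ, integral_finsetSum _ fun k _ => (hgap k).1,
    integral_const_mul, hE'_eq, Finset.sum_congr rfl fun k _ => hfi_eq k.succ] at hle
  have hsum : ∑ k : Fin (m + 1), ∫ U, leaveOneOutGap L erm k.succ 0 U ∂ν'
      ≤ (m + 1 : ℕ) * B :=
    (Finset.sum_le_card_nsmul _ _ B fun k _ => (hgap k).2).trans_eq (by simp)
  rw [Finset.sum_const, Finset.card_univ, Fintype.card_fin, nsmul_eq_mul] at hle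
  have hmul : ((m + 1 : ℕ) : ℝ) * (∫ S, trueRisk ℓ μ (erm S) ∂ν - ∫ S, empRisk ℓ S (erm S) ∂ν)
      ≤ (m + 1 : ℕ) * B := by
    rw [mul_sub]
    linarith
  exact le_of_mul_le_mul_left hmul hn0
end
end
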